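/- Let χ: Z → ℂ be a non-zero linear map. The category B_χ contains a non-zero g(μ,ν)-module if and only if χ(k₀) ≠ 0 and χ(k_j) = 0 for all j = 1, …, N. -/

import Mathlib

namespace ToroidalPaper

noncomputable section

/-- multi-indices r ∈ ℤ^{N+1} -/
abbrev Idx (N : ℕ) := Fin (N + 1) → ℤ

/-- The model for the 1-forms Ω¹_R: the free module on k₀,…,k_N over R,
written in the monomial basis t^r k_p. -/
abbrev OmegaR (N : ℕ) := Idx N →₀ (Fin (N + 1) → ℂ)

/-- The subspace d(R) ⊆ Ω¹_R of exact forms: d(t^r) = Σ_p r_p t^r k_p. -/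
def dR (N : ℕ) : Submodule ℂ (OmegaR N) :=
  Submodule.span ℂ {w : OmegaR N | ∃ r : Idx N, w = Finsupp.single r fun p => (r p : ℂ)}

/-- K = Ω¹_R / d(R) -/
abbrev Kmod (N : ℕ) := OmegaR N ⧸ dR N

variable (N : ℕ) (g : Type) [LieRing g] [LieAlgebra ℂ g]

/-- The underlying vector space of the full toroidal Lie algebra:
(R ⊗ ġ) ⊕ K ⊕ D, where R ⊗ ġ is modeled as `Idx N →₀ g` (coefficient of t^r)
and D as `Idx N →₀ (Fin (N+1) → ℂ)` (coefficients of t^r d_p). -/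
abbrev Carrier := (Idx N →₀ g) × Kmod N × (Idx N →₀ (Fin (N + 1) → ℂ))

/-- A realization of the vector space (R⊗ġ) ⊕ K ⊕ D as a Lie algebra:
a Lie algebra `G` together with a linear identification with the model. -/
structure Tor where
  G : Type
  [instLieRing : LieRing G]
  [instLieAlgebra : LieAlgebra ℂ G]
  e : G ≃ₗ[ℂ] Carrier N g

attribute [instance] Tor.instLieRing Tor.instLieAlgebra

namespace Tor

variable {N g}
variable (T : Tor N g)

/-- the element t^r ⊗ x of R ⊗ ġ -/
def tg (r : Idx N) (x : g) : T.G := T.e.symm (Finsupp.single r x, 0, 0)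

/-- the element t^r k_p of K -/
def k (r : Idx N) (p : Fin (N + 1)) : T.G :=
  T.e.symm (0, Submodule.Quotient.mk (p := dR N) (Finsupp.single r (Pi.single p 1)), 0)

/-- the element t^r d_p of D -/
def d (r : Idx N) (p : Fin (N + 1)) : T.G :=
  T.e.symm (0, 0, Finsupp.single r (Pi.single p 1))

/-- t^m · d(t^r) = Σ_p r_p t^{r+m} k_p -/
def kSum (r m : Idx N) : T.G := ∑ p : Fin (N + 1), (r p : ℂ) • T.k (r + m) p

/-- The bracket relations of the full toroidal Lie algebra g(μ,ν). -/
structure IsToroidal (B : g →ₗ[ℂ] g →ₗ[ℂ] ℂ) (μ ν : ℂ) : Prop where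
  br_gg : ∀ (r m : Idx N) (x y : g),
    ⁅T.tg r x, T.tg m y⁆ = T.tg (r + m) ⁅x, y⁆ + B x y • T.kSum r m
  br_kg : ∀ (r m : Idx N) (p : Fin (N + 1)) (x : g), ⁅T.k r p, T.tg m x⁆ = 0
  br_kk : ∀ (r m : Idx N) (p q : Fin (N + 1)), ⁅T.k r p, T.k m q⁆ = 0
  br_dg : ∀ (r m : Idx N) (a : Fin (N + 1)) (x : g),
    ⁅T.d r a, T.tg m x⁆ = (m a : ℂ) • T.tg (r + m) x
  br_dk : ∀ (r m : Idx N) (a b : Fin (N + 1)),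
    ⁅T.d r a, T.k m b⁆ = (m a : ℂ) • T.k (r + m) b
      + (if a = b then (1 : ℂ) else 0) • T.kSum r m
  br_dd : ∀ (r m : Idx N) (a b : Fin (N + 1)),
    ⁅T.d r a, T.d m b⁆ = (m a : ℂ) • T.d (r + m) b - (r b : ℂ) • T.d (r + m) a
      + (μ * (m a : ℂ) * (r b : ℂ) + ν * (r a : ℂ) * (m b : ℂ)) •
          (∑ p : Fin (N + 1), (m p : ℂ) • T.k (r + m) p)

end Tor

end

end ToroidalPaper

namespace ToroidalPaper

noncomputable section

namespace Tor

variable {N : ℕ} {g : Type} [LieRing g] [LieAlgebra ℂ g] (T : Tor N g)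

/-- The set of homogeneous generators t^r⊗x, t^r k_p, t^r d_p of g(μ,ν) whose
t₀-degree r₀ satisfies the predicate `P`. -/
def genSet (P : ℤ → Prop) : Set T.G :=
  {z | ∃ r : Idx N, P (r 0) ∧
    ((∃ x : g, z = T.tg r x) ∨ (∃ p, z = T.k r p) ∨ (∃ p, z = T.d r p))}

/-- The homogeneous component g_n of the ℤ-grading of g(μ,ν) by t₀-degree. -/
def gdeg (n : ℤ) : Submodule ℂ T.G := Submodule.span ℂ (T.genSet (· = n))

/-- The subalgebra g₊ = ⊕_{n ≥ 1} g_n (as a subspace). -/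
def gpos : Submodule ℂ T.G := Submodule.span ℂ (T.genSet (1 ≤ ·))

variable (Bm : Type) [AddCommGroup Bm] [Module ℂ Bm] [LieRingModule T.G Bm]
  [LieModule ℂ T.G Bm]

/-- The weight space B_m = {v ∈ B | d_j v = m_j v, j = 0,…,N}. -/
def wt (m : Fin (N + 1) → ℂ) : Submodule ℂ Bm :=
  ⨅ j : Fin (N + 1),
    Module.End.eigenspace (LieModule.toEnd ℂ T.G Bm (T.d 0 j)) (m j)

/-- The axioms (B1)-(B4) of the category B_χ, where the central character χ is
recorded through its values χ j = χ(k_j). -/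
structure InCat (χ : Fin (N + 1) → ℂ) : Prop where
  b1_indep : iSupIndep (fun m : Fin (N + 1) → ℂ => T.wt Bm m)
  b1_spans : (⨆ m : Fin (N + 1) → ℂ, T.wt Bm m) = ⊤
  b2 : ∀ m : Fin (N + 1) → ℂ, FiniteDimensional ℂ (T.wt Bm m)
  b3 : ∀ (j : Fin (N + 1)) (v : Bm), ⁅T.k 0 j, v⁆ = χ j • v
  b4 : ∃ M : ℝ, ∀ m : Fin (N + 1) → ℂ, T.wt Bm m ≠ ⊥ → (m 0).re ≤ M

end Tor

/-- A bundled object of the category B_χ. -/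
structure CatObj {N : ℕ} {g : Type} [LieRing g] [LieAlgebra ℂ g] (T : Tor N g)
    (χ : Fin (N + 1) → ℂ) where
  carrier : Type
  [instAdd : AddCommGroup carrier]
  [instMod : Module ℂ carrier]
  [instLieMod : LieRingModule T.G carrier]
  [instLieMod' : LieModule ℂ T.G carrier]
  incat : T.InCat carrier χ

attribute [instance] CatObj.instAdd CatObj.instMod CatObj.instLieMod CatObj.instLieMod'

/-- Irreducibility of an object of B_χ as a g(μ,ν)-module. -/
def CatObj.IsIrreducible {N : ℕ} {g : Type} [LieRing g] [LieAlgebra ℂ g] {T : Tor N g}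
    {χ : Fin (N + 1) → ℂ} (L : CatObj T χ) : Prop :=
  Nontrivial L.carrier ∧ ∀ S : LieSubmodule ℂ T.G L.carrier, S = ⊥ ∨ S = ⊤

end

end ToroidalPaper

namespace ToroidalPaper

noncomputable section

/-- Data for coinducing a representation `ρ` of the complement `ker pr` of a subalgebra `a`
to the whole Lie algebra; `ρ` is extended by zero to `a`. -/
structure CoindData (G V : Type) [LieRing G] [LieAlgebra ℂ G] [AddCommGroup V]
    [Module ℂ V] where
  a : LieSubalgebra ℂ G
  pr : G →ₗ[ℂ] a
  ρ : G →ₗ[ℂ] Module.End ℂ V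
  pr_coe : ∀ y : a, pr y = y
  ρ_coe : ∀ y : a, ρ y = 0
  pr_lie : ∀ x y : G, pr x = 0 → pr y = 0 → pr ⁅x, y⁆ = 0
  ρ_lie : ∀ x y : G, pr x = 0 → pr y = 0 → ρ ⁅x, y⁆ = ρ x * ρ y - ρ y * ρ x

namespace CoindData

variable {G V : Type} [LieRing G] [LieAlgebra ℂ G] [AddCommGroup V] [Module ℂ V]
  (c : CoindData G V)

/-- The action of `G` on `V`-valued functions of words in `a`. -/
def act : List c.a → G → (List c.a → V) → V
  | [], g, φ => c.ρ g (φ []) + φ [c.pr g]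
  | y :: ys, g, φ => act ys g (fun zs => φ (y :: zs)) + act ys ⁅(y : G), g⁆ φ

/-- A function of words is good when it is multilinear and factors through
the enveloping algebra of `a`. -/
structure Good (φ : List c.a → V) : Prop where
  add : ∀ us zs x y, φ (us ++ (x + y) :: zs) = φ (us ++ x :: zs) + φ (us ++ y :: zs)
  smul : ∀ us zs (t : ℂ) x, φ (us ++ (t • x) :: zs) = t • φ (us ++ x :: zs)
  rel : ∀ us zs x y,
    φ (us ++ x :: y :: zs) - φ (us ++ y :: x :: zs) = φ (us ++ ⁅y, x⁆ :: zs)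

variable {c}

theorem Good.tail {φ : List c.a → V} (h : c.Good φ) (y : c.a) :
    c.Good (fun zs => φ (y :: zs)) where
  add us := h.add (y :: us)
  smul us := h.smul (y :: us)
  rel us := h.rel (y :: us)

theorem act_add (ys : List c.a) (g : G) (φ ψ : List c.a → V) :
    c.act ys g (φ + ψ) = c.act ys g φ + c.act ys g ψ := by
  induction ys generalizing g φ ψ with
  | nil => simp only [act, Pi.add_apply, map_add]; abel
  | cons y ys ih =>
    simp only [act]
    rw [ih ⁅(y : G), g⁆, show (fun zs => (φ + ψ) (y :: zs)) =
      (fun zs => φ (y :: zs)) + fun zs => ψ (y :: zs) from rfl, ih]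
    abel

theorem act_smul (ys : List c.a) (g : G) (t : ℂ) (φ : List c.a → V) :
    c.act ys g (t • φ) = t • c.act ys g φ := by
  induction ys generalizing g φ with
  | nil => simp only [act, Pi.smul_apply, map_smul, smul_add]
  | cons y ys ih =>
    simp only [act]
    rw [ih ⁅(y : G), g⁆, show (fun zs => (t • φ) (y :: zs)) =
      t • (fun zs => φ (y :: zs)) from rfl, ih, smul_add]

theorem Good.act_add_left {φ : List c.a → V} (hφ : c.Good φ) (ys : List c.a) (g h : G) :
    c.act ys (g + h) φ = c.act ys g φ + c.act ys h φ := by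
  induction ys generalizing g h φ with
  | nil =>
    have := hφ.add [] [] (c.pr g) (c.pr h)
    simp only [List.nil_append] at this
    simp only [act, map_add, LinearMap.add_apply, this]; abel
  | cons y ys ih => simp only [act, lie_add, ih hφ, ih (hφ.tail y)]; abel

theorem Good.act_smul_left {φ : List c.a → V} (hφ : c.Good φ) (ys : List c.a) (t : ℂ)
    (g : G) : c.act ys (t • g) φ = t • c.act ys g φ := by
  induction ys generalizing g φ with
  | nil =>
    have := hφ.smul [] [] t (c.pr g)
    simp only [List.nil_append] at this
    simp only [act, map_smul, LinearMap.smul_apply, this, smul_add]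
  | cons y ys ih => simp only [act, lie_smul, ih hφ, ih (hφ.tail y), smul_add]

theorem Good.act_sub_left {φ : List c.a → V} (hφ : c.Good φ) (ys : List c.a) (g h : G) :
    c.act ys (g - h) φ = c.act ys g φ - c.act ys h φ := by
  rw [sub_eq_add_neg, hφ.act_add_left, ← neg_one_smul ℂ h, hφ.act_smul_left, neg_one_smul,
    sub_eq_add_neg]

theorem Good.zero : c.Good 0 := ⟨by simp, by simp, by simp⟩

theorem Good.add' {φ ψ : List c.a → V} (h : c.Good φ) (h' : c.Good ψ) : c.Good (φ + ψ) where
  add us zs x y := by simp only [Pi.add_apply, h.add, h'.add]; abel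
  smul us zs t x := by simp only [Pi.add_apply, h.smul, h'.smul, smul_add]
  rel us zs x y := by simp only [Pi.add_apply, ← h.rel, ← h'.rel]; abel

theorem Good.smul' {φ : List c.a → V} (h : c.Good φ) (t : ℂ) : c.Good (t • φ) where
  add us zs x y := by simp only [Pi.smul_apply, h.add, smul_add]
  smul us zs s x := by simp only [Pi.smul_apply, h.smul, smul_comm s t]
  rel us zs x y := by simp only [Pi.smul_apply, ← h.rel, smul_sub]

theorem Good.act {φ : List c.a → V} (hφ : c.Good φ) (g : G) :
    c.Good (fun ys => c.act ys g φ) where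
  add us zs x y := by
    induction us generalizing g φ with
    | nil =>
      have : (fun ws => φ ((x + y) :: ws)) = (fun ws => φ (x :: ws)) + fun ws => φ (y :: ws) :=
        funext fun ws => hφ.add [] ws x y
      simp only [List.nil_append, CoindData.act, this, act_add, AddMemClass.coe_add, add_lie,
        hφ.act_add_left]
      abel
    | cons u us ih =>
      simp only [List.cons_append, CoindData.act] at ih ⊢
      rw [ih (hφ.tail u), ih hφ]; abel
  smul us zs t x := by
    induction us generalizing g φ with
    | nil =>
      have : (fun ws => φ ((t • x) :: ws)) = t • (fun ws => φ (x :: ws)) :=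
        funext fun ws => hφ.smul [] ws t x
      simp only [List.nil_append, CoindData.act, this, act_smul, SetLike.val_smul, smul_lie,
        hφ.act_smul_left, smul_add]
    | cons u us ih =>
      simp only [List.cons_append, CoindData.act] at ih ⊢
      rw [ih (hφ.tail u), ih hφ, smul_add]
  rel us zs x y := by
    induction us generalizing g φ with
    | nil =>
      have : (fun ws => φ (⁅y, x⁆ :: ws)) =
          (fun ws => φ (x :: y :: ws)) + (-1 : ℂ) • fun ws => φ (y :: x :: ws) := by
        funext ws
        have := hφ.rel [] ws x y
        simp only [List.nil_append] at this
        simp [← this, sub_eq_add_neg]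
      simp only [List.nil_append, CoindData.act, this, act_add, act_smul, LieSubalgebra.coe_bracket,
        lie_lie, hφ.act_sub_left]
      simp only [neg_one_smul]
      abel
    | cons u us ih =>
      simp only [List.cons_append, CoindData.act] at ih ⊢
      rw [← ih (hφ.tail u), ← ih hφ]; abel

theorem Good.act_lie {φ : List c.a → V} (hφ : c.Good φ) (ys : List c.a) (g h : G) :
    c.act ys ⁅g, h⁆ φ = c.act ys g (fun zs => c.act zs h φ) -
      c.act ys h (fun zs => c.act zs g φ) := by
  induction ys generalizing g h φ with
  | nil =>
    set p := c.pr g with hp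
    set q := c.pr h with hq
    have hg : c.pr (g - p) = 0 := by rw [map_sub, c.pr_coe, sub_self]
    have hh : c.pr (h - q) = 0 := by rw [map_sub, c.pr_coe, sub_self]
    have key : ⁅g, h⁆ = ⁅g - p, h - q⁆ + ⁅(p : G), h⁆ - ⁅(q : G), g⁆ - ((⁅p, q⁆ : c.a) : G) := by
      simp only [sub_lie, lie_sub, LieSubalgebra.coe_bracket]
      rw [← lie_skew g (q : G)]; abel
    have h1 : c.ρ ⁅g, h⁆ = c.ρ g * c.ρ h - c.ρ h * c.ρ g + c.ρ ⁅(p : G), h⁆ -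
        c.ρ ⁅(q : G), g⁆ := by
      rw [key, map_sub, map_sub, map_add, c.ρ_coe, c.ρ_lie _ _ hg hh, map_sub, map_sub,
        c.ρ_coe, c.ρ_coe]
      simp
    have h2 : c.pr ⁅g, h⁆ = c.pr ⁅(p : G), h⁆ + ((-1 : ℂ) • c.pr ⁅(q : G), g⁆ + ⁅q, p⁆) := by
      rw [key, map_sub, map_sub, map_add, c.pr_coe, c.pr_lie _ _ hg hh, ← lie_skew p q]
      simp only [neg_one_smul, zero_add]; abel
    have a1 := hφ.add [] []
    have a2 := hφ.smul [] []
    have a3 := hφ.rel [] [] p q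
    simp only [List.nil_append] at a1 a2 a3
    simp only [CoindData.act, h2, a1, a2, ← a3, h1, ← hp, ← hq]
    simp only [LinearMap.sub_apply, LinearMap.add_apply, Module.End.mul_apply, map_add,
      neg_one_smul]
    abel
  | cons y ys ih =>
    have e : ∀ k : G, (fun zs => c.act (y :: zs) k φ) =
        (fun zs => c.act zs k (fun ws => φ (y :: ws))) + fun zs => c.act zs ⁅(y : G), k⁆ φ :=
      fun k => rfl
    have e2 : c.act (y :: ys) ⁅g, h⁆ φ =
      c.act ys ⁅g, h⁆ (fun zs => φ (y :: zs)) + c.act ys ⁅(y : G), ⁅g, h⁆⁆ φ := rfl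
    have e3 : ∀ k k' : G, c.act (y :: ys) k (fun zs => c.act zs k' φ) =
      c.act ys k (fun zs => c.act (y :: zs) k' φ) +
        c.act ys ⁅(y : G), k⁆ (fun zs => c.act zs k' φ) := fun _ _ => rfl
    rw [e2, e3, e3, e, e, act_add, act_add, ih (hφ.tail y), leibniz_lie, hφ.act_add_left,
      ih hφ, ih hφ]
    abel

variable (c)

/-- The coinduced module. -/
def Coind : Submodule ℂ (List c.a → V) where
  carrier := {φ | c.Good φ}
  add_mem' := Good.add'
  zero_mem' := Good.zero
  smul_mem' t _ h := h.smul' t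

instance : LieRingModule G c.Coind where
  bracket g φ := ⟨fun ys => c.act ys g φ.1, φ.2.act g⟩
  add_lie g h φ := Subtype.ext (funext fun ys => φ.2.act_add_left ys g h)
  lie_add g φ ψ := Subtype.ext (funext fun ys => act_add ys g φ.1 ψ.1)
  leibniz_lie g h φ := Subtype.ext (funext fun ys =>
    sub_eq_iff_eq_add.1 (φ.2.act_lie ys g h).symm)

instance : LieModule ℂ G c.Coind where
  smul_lie t g φ := Subtype.ext (funext fun ys => φ.2.act_smul_left ys t g)
  lie_smul t g φ := Subtype.ext (funext fun ys => act_smul ys g t φ.1)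

variable {c}

theorem lie_nil (g : G) (φ : c.Coind) : (⁅g, φ⁆ : c.Coind).1 [] = c.ρ g (φ.1 []) + φ.1 [c.pr g] :=
  rfl

/-- The derivative of a coinduced function along a letter. -/
def tail (y : c.a) (φ : c.Coind) : c.Coind := ⟨fun zs => φ.1 (y :: zs), φ.2.tail y⟩

theorem tail_lie (y : c.a) (g : G) (φ : c.Coind) :
    tail y ⁅g, φ⁆ = ⁅g, tail y φ⁆ + ⁅⁅(y : G), g⁆, φ⁆ := rfl

theorem coe_nil_singleton_zero (φ : c.Coind) : φ.1 [0] = 0 := by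
  simpa using φ.2.smul [] [] 0 0

theorem tail_tail (x y : c.a) (φ : c.Coind) :
    tail y (tail x φ) = tail x (tail y φ) + tail ⁅y, x⁆ φ :=
  Subtype.ext (funext fun zs => sub_eq_iff_eq_add'.1 (φ.2.rel [] zs x y))

theorem ext_tail {φ ψ : c.Coind} (h : φ.1 [] = ψ.1 []) (h' : ∀ y, tail y φ = tail y ψ) :
    φ = ψ := by
  refine Subtype.ext (funext fun zs => ?_)
  cases zs with
  | nil => exact h
  | cons y ys => exact congrFun (congrArg Subtype.val (h' y)) ys

theorem coe_lie_eq_tail (y : c.a) (φ : c.Coind) : ⁅(y : G), φ⁆ = tail y φ := by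
  refine Subtype.ext (funext fun zs => ?_)
  induction zs generalizing y φ with
  | nil =>
    rw [lie_nil, c.ρ_coe, c.pr_coe]
    simp [tail]
  | cons z zs ih =>
    change (tail z ⁅(y : G), φ⁆).1 zs = (tail z (tail y φ)).1 zs
    rw [tail_lie, tail_tail, ← LieSubalgebra.coe_bracket]
    exact congrArg₂ (· + ·) (ih y _) (ih _ φ)

theorem lie_apply_of_central {k : G} (hk : ∀ x : G, ⁅x, k⁆ = 0) (hp : c.pr k = 0)
    (φ : c.Coind) (zs : List c.a) : (⁅k, φ⁆ : c.Coind).1 zs = c.ρ k (φ.1 zs) := by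
  induction zs generalizing φ with
  | nil => rw [lie_nil, hp, coe_nil_singleton_zero, add_zero]
  | cons z zs ih =>
    change (tail z ⁅k, φ⁆).1 zs = c.ρ k ((tail z φ).1 zs)
    rw [tail_lie, hk, zero_lie, add_zero, ih]

variable (c)

/-- The coinduced function supported on the empty word. -/
def vac (v : V) : c.Coind :=
  ⟨fun zs => match zs with | [] => v | _ :: _ => 0,
    ⟨fun us zs x y => by cases us <;> simp, fun us zs x y => by cases us <;> simp,
      fun us zs x y => by cases us <;> simp⟩⟩

variable {c}

theorem tail_vac (y : c.a) (v : V) : tail y (c.vac v) = 0 := rfl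

theorem lie_vac_coe (y : c.a) (v : V) : ⁅(y : G), c.vac v⁆ = 0 := by
  rw [coe_lie_eq_tail, tail_vac]

theorem vac_smul (t : ℂ) (v : V) : c.vac (t • v) = t • c.vac v :=
  ext_tail rfl fun y => by
    change tail y (c.vac (t • v)) = t • tail y (c.vac v)
    simp only [tail_vac, smul_zero]

end CoindData

end

end ToroidalPaper

namespace ToroidalPaper

noncomputable section

namespace Tor

/-- The coefficient space of a fixed monomial `t^r`. -/
abbrev Coef (N : ℕ) (g : Type) := g × (Fin (N + 1) → ℂ) × (Fin (N + 1) → ℂ)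

/-- A multi-index as a complex vector. -/
def cvec {N : ℕ} (r : Idx N) : Fin (N + 1) → ℂ := fun p => (r p : ℂ)

theorem cvec_add {N : ℕ} (r m : Idx N) : cvec (r + m) = cvec r + cvec m := by
  ext p; simp [cvec]

variable {N : ℕ} {g : Type} [LieRing g] [LieAlgebra ℂ g] (T : Tor N g)

/-- The element `t^r ⊗ x + t^r Σ κ_p k_p + t^r Σ δ_p d_p`. -/
def gen (r : Idx N) : Coef N g →ₗ[ℂ] T.G :=
  T.e.symm.toLinearMap ∘ₗ LinearMap.prodMap (Finsupp.lsingle r)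
    (LinearMap.prodMap ((dR N).mkQ ∘ₗ Finsupp.lsingle r) (Finsupp.lsingle r))

theorem gen_apply (r : Idx N) (w : Coef N g) : T.gen r w =
    T.e.symm (Finsupp.single r w.1, (dR N).mkQ (Finsupp.single r w.2.1),
      Finsupp.single r w.2.2) := rfl

theorem tg_eq (r : Idx N) (x : g) : T.tg r x = T.gen r (x, 0, 0) := by
  simp [gen_apply, tg]

theorem k_eq (r : Idx N) (p : Fin (N + 1)) : T.k r p = T.gen r (0, Pi.single p 1, 0) := by
  simp [gen_apply, k]

theorem d_eq (r : Idx N) (p : Fin (N + 1)) : T.d r p = T.gen r (0, 0, Pi.single p 1) := by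
  simp [gen_apply, d]

theorem gen_k (r : Idx N) (κ : Fin (N + 1) → ℂ) :
    T.gen r (0, κ, 0) = ∑ p, κ p • T.k r p := by
  have : ((0, κ, 0) : Coef N g) = ∑ p, κ p • (0, Pi.single p 1, 0) := by
    conv_lhs => rw [pi_eq_sum_univ' κ]
    simp [Prod.ext_iff, Prod.fst_sum, Prod.snd_sum]
  rw [this, map_sum]
  simp only [map_smul, k_eq]

theorem gen_d (r : Idx N) (δ : Fin (N + 1) → ℂ) :
    T.gen r (0, 0, δ) = ∑ p, δ p • T.d r p := by
  have : ((0, 0, δ) : Coef N g) = ∑ p, δ p • (0, 0, Pi.single p 1) := by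
    conv_lhs => rw [pi_eq_sum_univ' δ]
    simp [Prod.ext_iff, Prod.fst_sum, Prod.snd_sum]
  rw [this, map_sum]
  simp only [map_smul, d_eq]

theorem gen_k_cvec (r : Idx N) : T.gen r (0, cvec r, 0) = 0 := by
  have : (dR N).mkQ (Finsupp.single r (cvec r)) = 0 :=
    (Submodule.Quotient.mk_eq_zero _).2 (Submodule.subset_span ⟨r, rfl⟩)
  simp [gen_apply, this]

theorem gen_split (r : Idx N) (w : Coef N g) :
    T.gen r w = T.gen r (w.1, 0, 0) + T.gen r (0, w.2.1, 0) + T.gen r (0, 0, w.2.2) := by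
  rw [← map_add, ← map_add]; simp

theorem kSum_eq (r m : Idx N) : T.kSum r m = T.gen (r + m) (0, cvec r, 0) := by
  rw [gen_k]; rfl

variable {T} {B : g →ₗ[ℂ] g →ₗ[ℂ] ℂ} {μ ν : ℂ}

open scoped Matrix

theorem IsToroidal.lie_gk (hT : T.IsToroidal B μ ν) (r m : Idx N) (x : g)
    (κ : Fin (N + 1) → ℂ) : ⁅T.gen r (x, 0, 0), T.gen m (0, κ, 0)⁆ = 0 := by
  rw [← lie_skew, gen_k, sum_lie, ← tg_eq]
  simp [hT.br_kg]

theorem IsToroidal.lie_kk (hT : T.IsToroidal B μ ν) (r m : Idx N)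
    (κ κ' : Fin (N + 1) → ℂ) : ⁅T.gen r (0, κ, 0), T.gen m (0, κ', 0)⁆ = 0 := by
  rw [gen_k, gen_k, sum_lie_sum]
  simp [hT.br_kk]

theorem IsToroidal.lie_dg (hT : T.IsToroidal B μ ν) (r m : Idx N) (x : g)
    (δ : Fin (N + 1) → ℂ) :
    ⁅T.gen r (0, 0, δ), T.gen m (x, 0, 0)⁆ = (δ ⬝ᵥ cvec m) • T.gen (r + m) (x, 0, 0) := by
  rw [gen_d, sum_lie, ← tg_eq, ← tg_eq]
  simp only [smul_lie, hT.br_dg, smul_smul, ← Finset.sum_smul, dotProduct, cvec]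

theorem IsToroidal.lie_dk (hT : T.IsToroidal B μ ν) (r m : Idx N)
    (δ κ : Fin (N + 1) → ℂ) :
    ⁅T.gen r (0, 0, δ), T.gen m (0, κ, 0)⁆ =
      T.gen (r + m) (0, (δ ⬝ᵥ cvec m) • κ + (δ ⬝ᵥ κ) • cvec r, 0) := by
  have : ((0, (δ ⬝ᵥ cvec m) • κ + (δ ⬝ᵥ κ) • cvec r, 0) : Coef N g) =
      (δ ⬝ᵥ cvec m) • (0, κ, 0) + (δ ⬝ᵥ κ) • (0, cvec r, 0) := by simp
  rw [this, map_add, map_smul, map_smul, gen_d, gen_k, sum_lie_sum, ← kSum_eq, gen_k]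
  have e : ∀ a b, ⁅δ a • T.d r a, κ b • T.k m b⁆ =
      (δ a * cvec m a) • κ b • T.k (r + m) b +
        (if a = b then δ a * κ b else 0) • T.kSum r m := by
    intro a b
    rw [smul_lie, lie_smul, hT.br_dk]
    simp only [cvec, smul_add, smul_smul, mul_ite, mul_one, mul_zero]
    congr! 2
    ring
  simp only [e, Finset.sum_add_distrib, ← Finset.sum_smul]
  congr 1
  · simp only [dotProduct, Finset.sum_smul_sum]
  · simp [dotProduct]

theorem IsToroidal.lie_dd (hT : T.IsToroidal B μ ν) (r m : Idx N)
    (δ δ' : Fin (N + 1) → ℂ) :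
    ⁅T.gen r (0, 0, δ), T.gen m (0, 0, δ')⁆ =
      T.gen (r + m) (0, (μ * (δ ⬝ᵥ cvec m) * (δ' ⬝ᵥ cvec r) +
        ν * (δ ⬝ᵥ cvec r) * (δ' ⬝ᵥ cvec m)) • cvec m,
          (δ ⬝ᵥ cvec m) • δ' - (δ' ⬝ᵥ cvec r) • δ) := by
  set A := δ ⬝ᵥ cvec m with hA
  set A' := δ' ⬝ᵥ cvec r with hA'
  set C := δ ⬝ᵥ cvec r with hC
  set C' := δ' ⬝ᵥ cvec m with hC'
  have : ((0, (μ * A * A' + ν * C * C') • cvec m, A • δ' - A' • δ) : Coef N g) =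
      A • (0, 0, δ') - A' • (0, 0, δ) + (μ * A * A' + ν * C * C') • (0, cvec m, 0) := by simp
  rw [this, map_add, map_sub, map_smul, map_smul, map_smul, gen_d, gen_d, gen_d, gen_d,
    sum_lie_sum]
  have e : ∀ a b, ⁅δ a • T.d r a, δ' b • T.d m b⁆ =
      (δ a * cvec m a) • δ' b • T.d (r + m) b - (δ' b * cvec r b) • δ a • T.d (r + m) a +
      (μ * ((δ a * cvec m a) * (δ' b * cvec r b)) + ν * ((δ a * cvec r a) * (δ' b * cvec m b))) •
        T.gen (r + m) (0, cvec m, 0) := by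
    intro a b
    rw [smul_lie, lie_smul, hT.br_dd, gen_k]
    simp only [cvec]
    module
  simp only [e, Finset.sum_add_distrib, Finset.sum_sub_distrib, ← Finset.sum_smul]
  congr 1
  · congr 1
    · simp only [hA, dotProduct, Finset.sum_smul_sum]
    · simp only [hA', dotProduct, Finset.smul_sum]
  · congr 1
    simp only [mul_assoc μ, mul_assoc ν, hA, hA', hC, hC', dotProduct, Finset.sum_mul_sum]
    simp only [Finset.mul_sum]

/-- The bracket of two homogeneous elements. -/
theorem IsToroidal.lie_gen (hT : T.IsToroidal B μ ν) (r m : Idx N) (w w' : Coef N g) :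
    ⁅T.gen r w, T.gen m w'⁆ = T.gen (r + m)
      (⁅w.1, w'.1⁆ + (w.2.2 ⬝ᵥ cvec m) • w'.1 - (w'.2.2 ⬝ᵥ cvec r) • w.1,
        (B w.1 w'.1) • cvec r
          + ((w.2.2 ⬝ᵥ cvec m) • w'.2.1 + (w.2.2 ⬝ᵥ w'.2.1) • cvec r)
          - ((w'.2.2 ⬝ᵥ cvec r) • w.2.1 + (w'.2.2 ⬝ᵥ w.2.1) • cvec m)
          + (μ * (w.2.2 ⬝ᵥ cvec m) * (w'.2.2 ⬝ᵥ cvec r) +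
            ν * (w.2.2 ⬝ᵥ cvec r) * (w'.2.2 ⬝ᵥ cvec m)) • cvec m,
        (w.2.2 ⬝ᵥ cvec m) • w'.2.2 - (w'.2.2 ⬝ᵥ cvec r) • w.2.2) := by
  obtain ⟨x, κ, δ⟩ := w
  obtain ⟨x', κ', δ'⟩ := w'
  have h1 : ⁅T.gen r (x, 0, 0), T.gen m (x', 0, 0)⁆ =
      T.gen (r + m) (⁅x, x'⁆, 0, 0) + B x x' • T.gen (r + m) (0, cvec r, 0) := by
    rw [← tg_eq, ← tg_eq, hT.br_gg, tg_eq, kSum_eq]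
  have h2 : ⁅T.gen r (0, κ, 0), T.gen m (x', 0, 0)⁆ = 0 := by
    rw [← lie_skew, hT.lie_gk, neg_zero]
  have h3 : ⁅T.gen r (x, 0, 0), T.gen m (0, 0, δ')⁆ =
      -((δ' ⬝ᵥ cvec r) • T.gen (r + m) (x, 0, 0)) := by
    rw [← lie_skew, hT.lie_dg, add_comm m]
  have h4 : ⁅T.gen r (0, κ, 0), T.gen m (0, 0, δ')⁆ =
      -(T.gen (r + m) (0, (δ' ⬝ᵥ cvec r) • κ + (δ' ⬝ᵥ κ) • cvec m, 0)) := by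
    rw [← lie_skew, hT.lie_dk, add_comm m]
  have e1 : T.gen r (x, κ, δ) = T.gen r (x, 0, 0) + T.gen r (0, κ, 0) + T.gen r (0, 0, δ) :=
    T.gen_split r _
  have e2 : T.gen m (x', κ', δ') = T.gen m (x', 0, 0) + T.gen m (0, κ', 0) + T.gen m (0, 0, δ') :=
    T.gen_split m _
  rw [e1, e2]
  simp only [add_lie, lie_add, h1, h2, h3, h4, hT.lie_gk, hT.lie_kk, hT.lie_dg, hT.lie_dk,
    hT.lie_dd, add_zero, zero_add]
  simp only [← map_smul, ← map_add, ← map_neg]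
  refine congrArg _ (Prod.ext ?_ (Prod.ext ?_ ?_))
  · simp only [Prod.fst_add, Prod.smul_fst, Prod.fst_neg]
    module
  · simp only [Prod.fst_add, Prod.smul_fst, Prod.fst_neg, Prod.snd_add, Prod.smul_snd,
      Prod.snd_neg]
    module
  · simp only [Prod.snd_add, Prod.smul_snd, Prod.snd_neg]
    module

variable (T)

theorem span_gen : Submodule.span ℂ {z | ∃ r w, z = T.gen r w} = ⊤ := by
  set S := Submodule.span ℂ {z | ∃ r w, z = T.gen r w}
  have hg : ∀ r w, T.gen r w ∈ S := fun r w => Submodule.subset_span ⟨r, w, rfl⟩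
  have h1 : ∀ f, T.e.symm (f, 0, 0) ∈ S := by
    intro f
    induction f using Finsupp.induction_linear with
    | zero => exact (map_zero T.e.symm).symm ▸ zero_mem S
    | add a b ha hb =>
      convert add_mem ha hb using 1
      rw [← map_add]; simp
    | single r x => convert hg r (x, 0, 0) using 1; simp [gen_apply]
  have h2 : ∀ f, T.e.symm (0, (dR N).mkQ f, 0) ∈ S := by
    intro f
    induction f using Finsupp.induction_linear with
    | zero => exact (map_zero T.e.symm).symm ▸ zero_mem S
    | add a b ha hb =>
      convert add_mem ha hb using 1
      rw [← map_add]; simp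
    | single r x => convert hg r (0, x, 0) using 1; simp [gen_apply]
  have h3 : ∀ f, T.e.symm (0, 0, f) ∈ S := by
    intro f
    induction f using Finsupp.induction_linear with
    | zero => exact (map_zero T.e.symm).symm ▸ zero_mem S
    | add a b ha hb =>
      convert add_mem ha hb using 1
      rw [← map_add]; simp
    | single r x => convert hg r (0, 0, x) using 1; simp [gen_apply]
  rw [eq_top_iff]
  intro z _
  obtain ⟨⟨f, q, h⟩, rfl⟩ := T.e.symm.surjective z
  obtain ⟨f', rfl⟩ := (dR N).mkQ_surjective q
  have : ((f, (dR N).mkQ f', h) : Carrier N g) = (f, 0, 0) + (0, (dR N).mkQ f', 0) + (0, 0, h) := by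
    simp
  rw [this, map_add, map_add]
  exact add_mem (add_mem (h1 _) (h2 _)) (h3 _)

theorem dR_le_ker {X : Type} [AddCommGroup X] [Module ℂ X] (f : Idx N → Coef N g →ₗ[ℂ] X)
    (hf : ∀ r, f r (0, cvec r, 0) = 0) :
    dR N ≤ (Finsupp.lsum ℂ fun r =>
      f r ∘ₗ LinearMap.inr ℂ _ _ ∘ₗ LinearMap.inl ℂ _ _).ker := by
  refine Submodule.span_le.2 ?_
  rintro _ ⟨r, rfl⟩
  rw [SetLike.mem_coe, LinearMap.mem_ker, Finsupp.lsum_single]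
  exact hf r

/-- The linear map out of the toroidal algebra with prescribed values on `T.gen r w`. -/
def lift {X : Type} [AddCommGroup X] [Module ℂ X] (f : Idx N → Coef N g →ₗ[ℂ] X)
    (hf : ∀ r, f r (0, cvec r, 0) = 0) : T.G →ₗ[ℂ] X :=
  LinearMap.coprod (Finsupp.lsum ℂ fun r => f r ∘ₗ LinearMap.inl ℂ _ _)
    (LinearMap.coprod
      ((dR N).liftQ (Finsupp.lsum ℂ fun r => f r ∘ₗ LinearMap.inr ℂ _ _ ∘ₗ LinearMap.inl ℂ _ _)
        (dR_le_ker f hf))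
      (Finsupp.lsum ℂ fun r => f r ∘ₗ LinearMap.inr ℂ _ _ ∘ₗ LinearMap.inr ℂ _ _)) ∘ₗ
  T.e.toLinearMap

theorem lift_gen {X : Type} [AddCommGroup X] [Module ℂ X] (f : Idx N → Coef N g →ₗ[ℂ] X)
    (hf : ∀ r, f r (0, cvec r, 0) = 0) (r : Idx N) (w : Coef N g) :
    T.lift f hf (T.gen r w) = f r w := by
  simp only [lift, gen_apply, LinearMap.comp_apply, LinearEquiv.coe_coe,
    LinearEquiv.apply_symm_apply, LinearMap.coprod_apply, Submodule.mkQ_apply,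
    Submodule.liftQ_apply, Finsupp.lsum_single, LinearMap.inl_apply, LinearMap.inr_apply]
  rw [← map_add, ← map_add]; simp

end Tor

end

end ToroidalPaper
namespace ToroidalPaper

noncomputable section

namespace Tor

variable {N : ℕ} {g : Type} [LieRing g] [LieAlgebra ℂ g] {T : Tor N g}
  {B : g →ₗ[ℂ] g →ₗ[ℂ] ℂ} {μ ν : ℂ}

open scoped Matrix

theorem cvec_zero : cvec (0 : Idx N) = 0 := by
  ext p; simp [cvec]

theorem cvec_single (j : Fin (N + 1)) (n : ℤ) :
    cvec (Pi.single j n) = Pi.single j (n : ℂ) := by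
  ext p
  by_cases h : p = j
  · subst h; simp [cvec]
  · simp [cvec, h]

theorem cvec_neg (r : Idx N) : cvec (-r) = -cvec r := by
  ext p; simp [cvec]

/-- The degree derivations act on homogeneous elements by their degree. -/
theorem IsToroidal.lie_d_gen (hT : T.IsToroidal B μ ν) (j : Fin (N + 1)) (r : Idx N)
    (w : Coef N g) : ⁅T.d 0 j, T.gen r w⁆ = (r j : ℂ) • T.gen r w := by
  rw [d_eq, hT.lie_gen, zero_add]
  have : ∀ (c : ℂ) (x y z : _), T.gen r (x, y + c • cvec r, z) = T.gen r (x, y, z) := by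
    intro c x y z
    have : ((x, y + c • cvec r, z) : Coef N g) = (x, y, z) + c • (0, cvec r, 0) := by simp
    rw [this, map_add, map_smul, gen_k_cvec, smul_zero, add_zero]
  rw [this, ← map_smul]
  refine congrArg _ (Prod.ext ?_ (Prod.ext ?_ ?_)) <;>
    simp [cvec_zero, show (Pi.single j 1 : Fin (N + 1) → ℂ) ⬝ᵥ cvec r = r j by simp [cvec]]

variable {M : Type} [AddCommGroup M] [Module ℂ M] [LieRingModule T.G M] [LieModule ℂ T.G M]

theorem mem_wt {m : Fin (N + 1) → ℂ} {v : M} :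
    v ∈ T.wt M m ↔ ∀ j, ⁅T.d 0 j, v⁆ = m j • v := by
  simp [wt, Submodule.mem_iInf]

theorem IsToroidal.gen_lie_mem_wt (hT : T.IsToroidal B μ ν) {m m' : Fin (N + 1) → ℂ} {v : M}
    (hv : v ∈ T.wt M m) (r : Idx N) (w : Coef N g) (h : m' = m + cvec r) :
    ⁅T.gen r w, v⁆ ∈ T.wt M m' := by
  rw [mem_wt] at hv ⊢
  intro j
  rw [leibniz_lie, hT.lie_d_gen, hv, smul_lie, lie_smul, h]
  simp only [Pi.add_apply, cvec]
  module

theorem linearIndependent_of_end {ι V : Type} [DecidableEq ι] [AddCommGroup V] [Module ℂ V]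
    (x y : ι → V)
    (P : ι → V →ₗ[ℂ] V) (hP : ∀ i j, P i (x j) = if i = j then y i else 0)
    (hy : ∀ i, y i ≠ 0) : LinearIndependent ℂ x := by
  rw [linearIndependent_iff']
  intro s c hc i hi
  have := congrArg (P i) hc
  simpa [map_sum, hP, hi, hy i] using this

theorem IsToroidal.lie_raise_lower (hT : T.IsToroidal B μ ν) (j : Fin (N + 1)) (hj : j ≠ 0)
    (t n n' : ℤ) :
    ⁅T.gen (Pi.single 0 t + Pi.single j n) (0, 0, Pi.single 0 1),
      T.gen (-Pi.single 0 t - Pi.single j n') (0, Pi.single 0 1, 0)⁆ =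
    if n = n' then (n : ℂ) • T.k 0 j else 0 := by
  rw [hT.lie_dk]
  have e1 : (Pi.single 0 1 : Fin (N + 1) → ℂ) ⬝ᵥ cvec (-Pi.single 0 t - Pi.single j n') = -t := by
    simp [cvec, hj.symm]
  have e2 : (Pi.single 0 1 : Fin (N + 1) → ℂ) ⬝ᵥ Pi.single 0 1 = 1 := by simp
  have e3 : (-(t : ℂ)) • (Pi.single 0 1 : Fin (N + 1) → ℂ) +
      (1 : ℂ) • cvec (Pi.single 0 t + Pi.single j n) = Pi.single j (n : ℂ) := by
    rw [cvec_add, cvec_single, cvec_single, one_smul, ← add_assoc, ← Pi.single_smul,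
      ← Pi.single_add]
    simp
  rw [e1, e2, e3, show (Pi.single 0 t + Pi.single j n + (-Pi.single 0 t - Pi.single j n') : Idx N) =
    Pi.single j (n - n') by rw [Pi.single_sub]; abel]
  have e4 : ∀ z : ℂ, ((0, Pi.single j z, 0) : Coef N g) = z • (0, Pi.single j 1, 0) := by
    intro z; simp [← Pi.single_smul]
  split_ifs with h
  · rw [h, sub_self, Pi.single_zero, e4, map_smul, k_eq]
  · have := T.gen_k_cvec (Pi.single j (n - n'))
    rw [cvec_single, e4, map_smul, smul_eq_zero] at this
    rw [e4, map_smul, this.resolve_left (by exact_mod_cast sub_ne_zero.2 h), smul_zero]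

theorem InCat.exists_top {χ : Fin (N + 1) → ℂ} (h : T.InCat M χ) [Nontrivial M] :
    ∃ l : Fin (N + 1) → ℂ, T.wt M l ≠ ⊥ ∧ ∀ m : Fin (N + 1) → ℂ,
      m 0 = l 0 + 1 → T.wt M m = ⊥ := by
  have hne : ∃ l, T.wt M l ≠ ⊥ := by
    by_contra! hh
    have := h.b1_spans
    simp [hh] at this
  obtain ⟨l₀, hl₀⟩ := hne
  obtain ⟨b, hb⟩ := h.b4
  set S : Set ℝ := {x | ∃ m, T.wt M m ≠ ⊥ ∧ (m 0).re = x}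
  have hS : BddAbove S := ⟨b, by rintro _ ⟨m, hm, rfl⟩; exact hb m hm⟩
  have hS' : S.Nonempty := ⟨_, l₀, hl₀, rfl⟩
  obtain ⟨_, ⟨l, hl, rfl⟩, hlt⟩ := exists_lt_of_lt_csSup hS' (sub_one_lt (sSup S))
  refine ⟨l, hl, fun m hm => ?_⟩
  by_contra hne
  have := le_csSup hS ⟨m, hne, rfl⟩
  rw [hm] at this
  simp at this
  linarith

/-- In a module of the category the central elements `k_j` with `j ≠ 0` act by zero. -/
theorem InCat.char_eq_zero (hT : T.IsToroidal B μ ν) {χ : Fin (N + 1) → ℂ} (h : T.InCat M χ)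
    [Nontrivial M] (j : Fin (N + 1)) (hj : j ≠ 0) : χ j = 0 := by
  by_contra hχ
  obtain ⟨l, hl, htop⟩ := h.exists_top
  let wn : ℤ → Submodule ℂ M := fun n => T.wt M (l + cvec (Pi.single j n))
  by_cases hfin : {n | wn n ≠ ⊥}.Finite
  · obtain ⟨n, hn⟩ := (hfin.union ((hfin.preimage (neg_injective.injOn)).union
      (Set.finite_singleton (0 : ℤ)))).exists_notMem
    simp only [Set.mem_union, Set.mem_ofPred_eq, Set.mem_preimage, Set.mem_singleton_iff,
      not_or, not_not] at hn
    obtain ⟨h1, h2, h3⟩ := hn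
    obtain ⟨v, hv, hv0⟩ := (Submodule.ne_bot_iff _).1 hl
    have hr := hT.lie_raise_lower j hj 0 n n
    rw [Pi.single_zero] at hr
    rw [if_pos rfl] at hr
    have e1 : ⁅T.gen (0 + Pi.single j n) (0, 0, Pi.single 0 1), v⁆ = 0 := by
      have := hT.gen_lie_mem_wt hv (0 + Pi.single j n) (0, 0, Pi.single 0 1)
        (m' := l + cvec (Pi.single j n)) (by rw [zero_add])
      rwa [show T.wt M _ = ⊥ from h1, Submodule.mem_bot] at this
    have e2 : ⁅T.gen (-0 - Pi.single j n) (0, Pi.single 0 1, 0), v⁆ = 0 := by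
      have := hT.gen_lie_mem_wt hv (-0 - Pi.single j n) (0, Pi.single 0 1, 0)
        (m' := l + cvec (Pi.single j (-n))) (by
          rw [neg_zero, zero_sub, Pi.single_neg])
      rwa [show T.wt M _ = ⊥ from h2, Submodule.mem_bot] at this
    have := congrArg (⁅·, v⁆) hr
    simp only [lie_lie, e1, e2, lie_zero, sub_zero, smul_lie, h.b3, smul_smul] at this
    have := this.symm
    simp [hχ, h3, hv0] at this
  · have hfin' : ¬ ({n | wn n ≠ ⊥} \ {0}).Finite := fun hh =>
      hfin (hh.of_sdiff (Set.finite_singleton 0))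
    set I := {n | wn n ≠ ⊥} \ {0} with hI
    have : ∀ n : I, ∃ v ∈ wn n, v ≠ 0 := fun n => (Submodule.ne_bot_iff _).1 n.2.1
    choose v hv hv0 using this
    let e : Idx N := Pi.single 0 1
    let p : I → T.G := fun n => T.gen (e + Pi.single j n.1) (0, 0, Pi.single 0 1)
    let q : I → T.G := fun n => T.gen (-e - Pi.single j n.1) (0, Pi.single 0 1, 0)
    have hq : ∀ n, ⁅q n, v n⁆ ∈ T.wt M (l - cvec e) := fun n => 
      hT.gen_lie_mem_wt (hv n) _ _ (by rw [sub_eq_add_neg (-e), cvec_add, cvec_neg, cvec_neg]; abel)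
    have hp : ∀ n n', ⁅p n, v n'⁆ = 0 := by
      intro n n'
      have := hT.gen_lie_mem_wt (hv n') (e + Pi.single j n.1) (0, 0, Pi.single 0 1) rfl
      rwa [htop _ (by simp [cvec, e, hj.symm]), Submodule.mem_bot] at this
    have hli : LinearIndependent ℂ fun n => ⁅q n, v n⁆ := by
      refine linearIndependent_of_end _ (fun n => ((n.1 : ℂ) * χ j) • v n)
        (fun n => LieModule.toEnd ℂ T.G M (p n)) ?_ ?_
      · intro n n'
        rw [LieModule.toEnd_apply_apply, leibniz_lie, hp, lie_zero, add_zero,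
          hT.lie_raise_lower j hj]
        by_cases hnn : n = n'
        · subst hnn
          simp [h.b3, smul_smul]
        · simp [hnn, Subtype.coe_injective.ne hnn]
      · intro n
        have : n.1 ≠ 0 := n.2.2
        simp [hχ, hv0, this]
    have hli' : LinearIndependent ℂ fun n => (⟨_, hq n⟩ : T.wt M (l - cvec e)) :=
      LinearIndependent.of_comp (T.wt M (l - cvec e)).subtype hli
    have := h.b2 (l - cvec e)
    exact hfin' (Set.finite_coe_iff.1 hli'.finite)

end Tor

end

end ToroidalPaper
namespace ToroidalPaper

noncomputable section

namespace Tor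

variable {N : ℕ} {g : Type} [LieRing g] [LieAlgebra ℂ g] (T : Tor N g)
  {B : g →ₗ[ℂ] g →ₗ[ℂ] ℂ} {μ ν : ℂ}

open scoped Matrix

/-- The span of the homogeneous elements whose `t₀`-degree satisfies `P`. -/
def part (P : ℤ → Prop) : Submodule ℂ T.G :=
  Submodule.span ℂ {z | ∃ r w, P (r 0) ∧ z = T.gen r w}

variable {T}

theorem gen_mem_part {P : ℤ → Prop} {r : Idx N} (h : P (r 0)) (w : Coef N g) :
    T.gen r w ∈ T.part P := Submodule.subset_span ⟨r, w, h, rfl⟩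

@[elab_as_elim]
theorem part_induction {P : ℤ → Prop} {p : ∀ x, x ∈ T.part P → Prop}
    (gen : ∀ r w (h : P (r 0)), p (T.gen r w) (gen_mem_part h w)) (zero : p 0 (zero_mem _))
    (add : ∀ x y hx hy, p x hx → p y hy → p (x + y) (add_mem hx hy))
    (smul : ∀ (t : ℂ) x hx, p x hx → p (t • x) (Submodule.smul_mem _ t hx))
    {x : T.G} (hx : x ∈ T.part P) : p x hx := by
  induction hx using Submodule.span_induction with
  | mem x h => obtain ⟨r, w, h, rfl⟩ := h; exact gen r w h
  | zero => exact zero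
  | add x y hx hy h h' => exact add x y hx hy h h'
  | smul t x hx h => exact smul t x hx h

theorem mem_part_true (x : T.G) : x ∈ T.part fun _ => True := by
  have := T.span_gen
  simp only [part, true_and]
  rw [this]; trivial

theorem IsToroidal.lie_mem_part (hT : T.IsToroidal B μ ν) {P Q R : ℤ → Prop}
    (h : ∀ a b, P a → Q b → R (a + b)) {x y : T.G} (hx : x ∈ T.part P) (hy : y ∈ T.part Q) :
    ⁅x, y⁆ ∈ T.part R := by
  induction hx using part_induction with
  | zero => simp
  | add x x' _ _ hx hx' => rw [add_lie]; exact add_mem hx hx'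
  | smul t x _ hx => rw [smul_lie]; exact Submodule.smul_mem _ _ hx
  | gen r w hr =>
    induction hy using part_induction with
    | zero => simp
    | add x x' _ _ hx hx' => rw [lie_add]; exact add_mem hx hx'
    | smul t x _ hx => rw [lie_smul]; exact Submodule.smul_mem _ _ hx
    | gen m w' hm => rw [hT.lie_gen]; exact gen_mem_part (h _ _ hr hm) _

/-- The subalgebra of elements of positive `t₀`-degree. -/
def posPart (hT : T.IsToroidal B μ ν) : LieSubalgebra ℂ T.G where
  toSubmodule := T.part (1 ≤ ·)
  lie_mem' hx hy := hT.lie_mem_part (fun _ _ h h' => by omega) hx hy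

variable (T) in
/-- The projection onto the part of positive `t₀`-degree. -/
def proj : T.G →ₗ[ℂ] T.G :=
  T.lift (fun r => if 1 ≤ r 0 then T.gen r else 0) fun r => by
    split_ifs
    · exact T.gen_k_cvec r
    · rfl

theorem proj_gen (r : Idx N) (w : Coef N g) :
    T.proj (T.gen r w) = if 1 ≤ r 0 then T.gen r w else 0 := by
  rw [proj, lift_gen]; split_ifs <;> rfl

theorem proj_mem (x : T.G) : T.proj x ∈ T.part (1 ≤ ·) := by
  induction mem_part_true x using part_induction with
  | zero => simp
  | add x y _ _ hx hy => rw [map_add]; exact add_mem hx hy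
  | smul t x _ hx => rw [map_smul]; exact Submodule.smul_mem _ _ hx
  | gen r w _ =>
    rw [proj_gen]
    split_ifs with h
    · exact gen_mem_part h w
    · exact zero_mem _

theorem sub_proj_mem (x : T.G) : x - T.proj x ∈ T.part (· ≤ 0) := by
  induction mem_part_true x using part_induction with
  | zero => simp
  | add x y _ _ hx hy => rw [map_add, add_sub_add_comm]; exact add_mem hx hy
  | smul t x _ hx => rw [map_smul, ← smul_sub]; exact Submodule.smul_mem _ _ hx
  | gen r w _ =>
    rw [proj_gen]
    split_ifs with h
    · simp
    · rw [sub_zero]; exact gen_mem_part (P := (· ≤ 0)) (by omega) w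

theorem proj_of_pos {x : T.G} (hx : x ∈ T.part (1 ≤ ·)) : T.proj x = x := by
  induction hx using part_induction with
  | zero => simp
  | add x y _ _ hx hy => rw [map_add, hx, hy]
  | smul t x _ hx => rw [map_smul, hx]
  | gen r w hr => rw [proj_gen, if_pos hr]

theorem proj_of_nonpos {x : T.G} (hx : x ∈ T.part (· ≤ 0)) : T.proj x = 0 := by
  induction hx using part_induction with
  | zero => simp
  | add x y _ _ hx hy => rw [map_add, hx, hy, add_zero]
  | smul t x _ hx => rw [map_smul, hx, smul_zero]
  | gen r w hr => rw [proj_gen, if_neg (by omega)]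

theorem proj_eq_zero_iff {x : T.G} : T.proj x = 0 ↔ x ∈ T.part (· ≤ 0) :=
  ⟨fun h => by simpa [h] using sub_proj_mem x, proj_of_nonpos⟩

/-- Laurent polynomials in `t₁, …, t_N`. -/
abbrev Top (N : ℕ) := (Fin N → ℤ) →₀ ℂ

/-- Extension of a multi-index by zero. -/
def hat (s : Fin N → ℤ) : Idx N := Fin.cons 0 s

theorem hat_tail_add {r : Idx N} (h : r 0 = 0) (s : Fin N → ℤ) :
    hat (Fin.tail r + s) = r + hat s := by
  ext p
  refine Fin.cases ?_ (fun i => ?_) p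
  · simp [hat, h]
  · simp [hat, Fin.tail]

/-- The scalar by which a homogeneous element acts on `t^s`. -/
def topCoef (χ : Fin (N + 1) → ℂ) (s : Fin N → ℤ) : Coef N g →ₗ[ℂ] ℂ where
  toFun w := χ ⬝ᵥ w.2.1 + cvec (hat s) ⬝ᵥ w.2.2
  map_add' w w' := by simp only [Prod.snd_add, Prod.fst_add, dotProduct_add]; ring
  map_smul' t w := by
    simp only [Prod.smul_snd, Prod.smul_fst, dotProduct_smul, smul_eq_mul, RingHom.id_apply]; ring

/-- The action of `t^r w` on the top. -/
def topGen (χ : Fin (N + 1) → ℂ) (r : Idx N) : Coef N g →ₗ[ℂ] Module.End ℂ (Top N) where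
  toFun w := Finsupp.lsum ℂ fun s => topCoef χ s w • Finsupp.lsingle (Fin.tail r + s)
  map_add' w w' := by
    ext1 s; ext1
    simp [Finsupp.single_add]
  map_smul' t w := by
    ext1 s; ext1
    simp

theorem topGen_single (χ : Fin (N + 1) → ℂ) (r : Idx N) (w : Coef N g) (s : Fin N → ℤ) (c : ℂ) :
    topGen χ r w (Finsupp.single s c) = Finsupp.single (Fin.tail r + s) (topCoef χ s w * c) := by
  simp [topGen]

theorem dotProduct_cvec_eq_zero {χ : Fin (N + 1) → ℂ} (hχ : ∀ j, j ≠ 0 → χ j = 0) {r : Idx N}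
    (hr : r 0 = 0) : χ ⬝ᵥ cvec r = 0 := by
  refine Finset.sum_eq_zero fun j _ => ?_
  by_cases h : j = 0
  · simp [h, cvec, hr]
  · simp [hχ j h]

variable (T) in
/-- The action of the toroidal algebra on the top. -/
def topAct (χ : Fin (N + 1) → ℂ) (hχ : ∀ j, j ≠ 0 → χ j = 0) :
    T.G →ₗ[ℂ] Module.End ℂ (Top N) :=
  T.lift (X := Module.End ℂ (Top N)) (fun r => if r 0 = 0 then topGen χ r else 0) fun r => by
    split_ifs with h
    · ext1 s
      ext1
      simp [topGen_single, topCoef, dotProduct_cvec_eq_zero hχ h]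
    · rfl

variable {χ : Fin (N + 1) → ℂ} {hχ : ∀ j, j ≠ 0 → χ j = 0}

theorem topAct_gen (r : Idx N) (w : Coef N g) :
    T.topAct χ hχ (T.gen r w) = if r 0 = 0 then topGen χ r w else 0 := by
  rw [topAct, lift_gen]; split_ifs <;> rfl

theorem topAct_gen_single (r : Idx N) (w : Coef N g) (s : Fin N → ℤ) (c : ℂ) :
    T.topAct χ hχ (T.gen r w) (Finsupp.single s c) =
      if r 0 = 0 then Finsupp.single (Fin.tail r + s) (topCoef χ s w * c) else 0 := by
  rw [topAct_gen]; split_ifs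
  · rw [topGen_single]
  · rfl

theorem topAct_pos {x : T.G} (hx : x ∈ T.part (1 ≤ ·)) : T.topAct χ hχ x = 0 := by
  induction hx using part_induction with
  | zero => simp
  | add x y _ _ hx hy => rw [map_add, hx, hy, add_zero]
  | smul t x _ hx => rw [map_smul, hx, smul_zero]
  | gen r w hr => rw [topAct_gen, if_neg (by omega)]

theorem IsToroidal.topAct_lie (hT : T.IsToroidal B μ ν) {x y : T.G} (hx : x ∈ T.part (· ≤ 0))
    (hy : y ∈ T.part (· ≤ 0)) : T.topAct χ hχ ⁅x, y⁆ =
      T.topAct χ hχ x * T.topAct χ hχ y - T.topAct χ hχ y * T.topAct χ hχ x := by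
  induction hx using part_induction with
  | zero =>
    simp only [zero_lie, map_zero, zero_mul, mul_zero]
    exact (sub_zero (0 : Module.End ℂ (Top N))).symm
  | add x x' _ _ hx hx' =>
    rw [add_lie, map_add, map_add, hx, hx', add_mul, mul_add]; abel
  | smul t x _ hx =>
    rw [smul_lie, map_smul, map_smul, hx, smul_mul_assoc, mul_smul_comm]
    exact LinearMap.ext fun v => smul_sub t (_ : Top N) _
  | gen r w hr =>
    induction hy using part_induction with
    | zero =>
      simp only [lie_zero, map_zero, zero_mul, mul_zero]
      exact (sub_zero (0 : Module.End ℂ (Top N))).symm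
    | add x x' _ _ hx hx' =>
      rw [lie_add, map_add, map_add, hx, hx', add_mul, mul_add]; abel
    | smul t x _ hx =>
      rw [lie_smul, map_smul, map_smul, hx, smul_mul_assoc, mul_smul_comm]
      exact LinearMap.ext fun v => smul_sub t (_ : Top N) _
    | gen m w' hm =>
      rw [hT.lie_gen]
      simp only [topAct_gen, Pi.add_apply]
      by_cases h0 : r 0 = 0 ∧ m 0 = 0
      · obtain ⟨h1, h2⟩ := h0
        rw [if_pos (by omega), if_pos h1, if_pos h2]
        ext1 s
        ext1
        simp only [LinearMap.comp_apply, Finsupp.lsingle_apply, LinearMap.sub_apply,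
          Module.End.mul_apply, topGen_single, mul_one]
        have e1 : Fin.tail (r + m) + s = Fin.tail r + (Fin.tail m + s) := by
          rw [← add_assoc]; rfl
        have e2 : Fin.tail m + (Fin.tail r + s) = Fin.tail r + (Fin.tail m + s) :=
          add_left_comm _ _ _
        rw [e1, e2, ← Finsupp.single_sub]
        congr 1
        simp only [topCoef, LinearMap.coe_mk, AddHom.coe_mk, hat_tail_add h1, hat_tail_add h2,
          cvec_add, dotProduct_add, dotProduct_sub, dotProduct_smul, add_dotProduct,
          dotProduct_cvec_eq_zero hχ h1, dotProduct_cvec_eq_zero hχ h2, smul_eq_mul]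
        rw [dotProduct_comm (cvec r), dotProduct_comm (cvec m)]
        ring
      · rw [if_neg (by omega)]
        rcases not_and_or.1 h0 with h | h <;>
          simp only [h, if_false, zero_mul, mul_zero] <;>
            exact (sub_zero (0 : Module.End ℂ (Top N))).symm

variable (χ hχ) in
/-- The data for the coinduced module. -/
def coindData (hT : T.IsToroidal B μ ν) : CoindData T.G (Top N) where
  a := posPart hT
  pr := T.proj.codRestrict (T.part (1 ≤ ·)) proj_mem
  ρ := T.topAct χ hχ
  pr_coe y := Subtype.ext (proj_of_pos y.2)
  ρ_coe y := topAct_pos y.2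
  pr_lie x y hx hy := by
    have hx' := proj_eq_zero_iff.1 (congrArg Subtype.val hx)
    have hy' := proj_eq_zero_iff.1 (congrArg Subtype.val hy)
    exact Subtype.ext (proj_eq_zero_iff.2 (hT.lie_mem_part (fun _ _ h h' => by omega) hx' hy'))
  ρ_lie x y hx hy :=
    hT.topAct_lie (proj_eq_zero_iff.1 (congrArg Subtype.val hx))
      (proj_eq_zero_iff.1 (congrArg Subtype.val hy))

end Tor

end

end ToroidalPaper
namespace ToroidalPaper

noncomputable section

namespace Tor

variable {N : ℕ} {g : Type} [LieRing g] [LieAlgebra ℂ g] {T : Tor N g}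
  {B : g →ₗ[ℂ] g →ₗ[ℂ] ℂ} {μ ν : ℂ}

open scoped Matrix

section Weights

variable {M : Type} [AddCommGroup M] [Module ℂ M] [LieRingModule T.G M] [LieModule ℂ T.G M]

theorem IsToroidal.iSupIndep_wt (hT : T.IsToroidal B μ ν) : iSupIndep fun m => T.wt M m := by
  have hc : ∀ i j, Commute (LieModule.toEnd ℂ T.G M (T.d 0 i))
      (LieModule.toEnd ℂ T.G M (T.d 0 j)) := by
    intro i j
    refine LinearMap.ext fun v => ?_
    change ⁅T.d 0 i, ⁅T.d 0 j, v⁆⁆ = ⁅T.d 0 j, ⁅T.d 0 i, v⁆⁆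
    rw [leibniz_lie, d_eq T 0 j, hT.lie_d_gen]
    simp
  have := Module.End.independent_iInf_maxGenEigenspace_of_forall_mapsTo
    (fun j => LieModule.toEnd ℂ T.G M (T.d 0 j)) fun i j φ =>
      Module.End.mapsTo_maxGenEigenspace_of_comm (hc j i) φ
  refine this.mono fun m => iInf_mono fun j => ?_
  exact (Module.End.genEigenspace _ _).mono le_top

theorem IsToroidal.mem_span_of_mem_wt (hT : T.IsToroidal B μ ν) {I : Type} {X : I → M}
    {ω : I → Fin (N + 1) → ℂ} (hX : ∀ i, X i ∈ T.wt M (ω i)) {m : Fin (N + 1) → ℂ} {v : M}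
    (hv : v ∈ T.wt M m) (hs : v ∈ Submodule.span ℂ (Set.range X)) :
    v ∈ Submodule.span ℂ (X '' {i | ω i = m}) := by
  have h : Set.range X = X '' {i | ω i = m} ∪ X '' {i | ω i ≠ m} := by
    rw [← Set.image_union, ← Set.image_univ]
    congr
    ext i
    simp [em]
  rw [h, Submodule.span_union, Submodule.mem_sup] at hs
  obtain ⟨a, ha, b, hb, rfl⟩ := hs
  have ha' : a ∈ T.wt M m := by
    refine Submodule.span_le.2 ?_ ha
    rintro _ ⟨i, hi, rfl⟩
    exact (show ω i = m from hi) ▸ hX i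
  have hb' : b ∈ ⨆ (m') (_ : m' ≠ m), T.wt M m' := by
    refine Submodule.span_le.2 ?_ hb
    rintro _ ⟨i, hi, rfl⟩
    exact Submodule.mem_iSup_of_mem (ω i) (Submodule.mem_iSup_of_mem hi (hX i))
  have := Submodule.disjoint_def.1 (hT.iSupIndep_wt (M := M) m) b
    ((Submodule.add_mem_iff_right _ ha').1 hv) hb'
  rw [this, add_zero]
  exact ha

end Weights

variable (χ : Fin (N + 1) → ℂ) (hχ : ∀ j, j ≠ 0 → χ j = 0) (hT : T.IsToroidal B μ ν)

/-- The module coinduced from the top. -/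
abbrev BigMod : Type := (coindData χ hχ hT).Coind

instance : AddCommGroup (BigMod χ hχ hT) :=
  Submodule.addCommGroup (M := List (coindData χ hχ hT).a → Top N) _

/-- The vector of the big module corresponding to `t^s` in the top. -/
def base (s : Fin N → ℤ) : BigMod χ hχ hT := (coindData χ hχ hT).vac (Finsupp.single s 1)

variable {ι : Type} (b : Module.Basis ι ℂ (Coef N g))

/-- Products of homogeneous elements applied to a vector of the top. -/
def word : List (Idx N × ι) → (Fin N → ℤ) → BigMod χ hχ hT
  | [], s => base χ hχ hT s
  | x :: l, s => ⁅T.gen x.1 (b x.2), word l s⁆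

/-- The total degree of a list of letters. -/
def wsum (l : List (Idx N × ι)) : Idx N := (l.map Prod.fst).sum

/-- Words all of whose letters have negative `t₀`-degree. -/
abbrev NegWord (N : ℕ) (ι : Type) : Type :=
  {l : List (Idx N × ι) // ∀ x ∈ l, x.1 0 < 0} × (Fin N → ℤ)

/-- The vectors spanning the module. -/
def wvec (i : NegWord N ι) : BigMod χ hχ hT := word χ hχ hT b i.1.1 i.2

/-- The span of the words. -/
def wspan : Submodule ℂ (BigMod χ hχ hT) := Submodule.span ℂ (Set.range (wvec χ hχ hT b))

variable {χ hχ hT b}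

theorem word_mem {l : List (Idx N × ι)} (hl : ∀ x ∈ l, x.1 0 < 0) (s : Fin N → ℤ) :
    word χ hχ hT b l s ∈ wspan χ hχ hT b := Submodule.subset_span ⟨(⟨l, hl⟩, s), rfl⟩

theorem lie_mem_wspan {x : T.G} (h : ∀ (l : List (Idx N × ι)) (_ : ∀ y ∈ l, y.1 0 < 0) s,
    ⁅x, word χ hχ hT b l s⁆ ∈ wspan χ hχ hT b) {v : BigMod χ hχ hT} (hv : v ∈ wspan χ hχ hT b) :
    ⁅x, v⁆ ∈ wspan χ hχ hT b := by
  have : wspan χ hχ hT b ≤ (wspan χ hχ hT b).comap (LieModule.toEnd ℂ T.G (BigMod χ hχ hT) x) := by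
    refine Submodule.span_le.2 ?_
    rintro _ ⟨⟨⟨l, hl⟩, s⟩, rfl⟩
    exact h l hl s
  exact this hv

theorem lie_vac {r : Idx N} (hr : r 0 = 0) (w : Coef N g) (v : Top N) :
    (⁅T.gen r w, (coindData χ hχ hT).vac v⁆ : BigMod χ hχ hT) =
      (coindData χ hχ hT).vac (T.topAct χ hχ (T.gen r w) v) := by
  refine CoindData.ext_tail ?_ fun y => ?_
  · rw [CoindData.lie_nil]
    exact add_zero _
  · have hy : ⁅(y : T.G), T.gen r w⁆ ∈ T.part (1 ≤ ·) :=
      hT.lie_mem_part (Q := (· = 0)) (fun _ _ h h' => by omega) y.2 (gen_mem_part hr w)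
    have h1 : ⁅T.gen r w, (0 : BigMod χ hχ hT)⁆ = 0 := lie_zero _
    rw [CoindData.tail_lie, CoindData.tail_vac, CoindData.tail_vac]
    exact (congrArg (· + _) h1).trans ((zero_add _).trans
      (CoindData.lie_vac_coe (c := coindData χ hχ hT) ⟨_, hy⟩ v))

theorem lie_word_mem_of_neg {x : T.G} (hx : x ∈ T.part (· < 0)) {l : List (Idx N × ι)}
    (hl : ∀ y ∈ l, y.1 0 < 0) (s : Fin N → ℤ) :
    ⁅x, word χ hχ hT b l s⁆ ∈ wspan χ hχ hT b := by
  induction hx using part_induction with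
  | zero => rw [zero_lie]; exact zero_mem _
  | add x y _ _ h h' => rw [add_lie]; exact add_mem h h'
  | smul t x _ h => rw [smul_lie]; exact Submodule.smul_mem _ t h
  | gen r w hr =>
    induction b.mem_span w using Submodule.span_induction with
    | zero => rw [map_zero, zero_lie]; exact zero_mem _
    | add x y _ _ h h' => rw [map_add, add_lie]; exact add_mem h h'
    | smul t x _ h => rw [map_smul, smul_lie]; exact Submodule.smul_mem _ t h
    | mem w hw =>
      obtain ⟨i, rfl⟩ := hw
      exact word_mem (l := (r, i) :: l) (List.forall_mem_cons.2 ⟨hr, hl⟩) s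

theorem lie_mem_wspan_of_neg {x : T.G} (hx : x ∈ T.part (· < 0)) {v : BigMod χ hχ hT}
    (hv : v ∈ wspan χ hχ hT b) : ⁅x, v⁆ ∈ wspan χ hχ hT b :=
  lie_mem_wspan (fun _ hl s => lie_word_mem_of_neg hx hl s) hv

theorem lie_base_mem (x : T.G) (s : Fin N → ℤ) :
    ⁅x, base χ hχ hT s⁆ ∈ wspan χ hχ hT b := by
  have hb : ∀ s, base χ hχ hT s ∈ wspan χ hχ hT b := word_mem (l := []) (by simp)
  induction mem_part_true x using part_induction with
  | zero => rw [zero_lie]; exact zero_mem _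
  | add x y _ _ h h' => rw [add_lie]; exact add_mem h h'
  | smul t x _ h => rw [smul_lie]; exact Submodule.smul_mem _ t h
  | gen r w _ =>
    rcases lt_trichotomy (r 0) 0 with h | h | h
    · exact lie_mem_wspan_of_neg (gen_mem_part (P := (· < 0)) h w) (hb s)
    · rw [base, lie_vac h, topAct_gen_single, if_pos h, ← Finsupp.smul_single_one,
        CoindData.vac_smul]
      exact Submodule.smul_mem _ _ (hb _)
    · have := CoindData.lie_vac_coe (c := coindData χ hχ hT)
        ⟨_, gen_mem_part (P := (1 ≤ ·)) h w⟩ (Finsupp.single s 1)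
      rw [base]
      exact (congrArg (· ∈ wspan χ hχ hT b) this).mpr (zero_mem _)

theorem lie_word_mem {l : List (Idx N × ι)} (hl : ∀ x ∈ l, x.1 0 < 0) (s : Fin N → ℤ) (x : T.G) :
    ⁅x, word χ hχ hT b l s⁆ ∈ wspan χ hχ hT b := by
  induction l generalizing x with
  | nil => exact lie_base_mem x s
  | cons y l ih =>
    have ih := ih fun z hz => hl z (List.mem_cons_of_mem _ hz)
    rw [word, leibniz_lie]
    exact add_mem (ih _) (lie_mem_wspan_of_neg
      (gen_mem_part (P := (· < 0)) (hl y List.mem_cons_self) _) (ih _))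

variable (χ hχ hT b)

/-- The submodule generated by the top. -/
def wordMod : LieSubmodule ℂ T.G (BigMod χ hχ hT) where
  __ := wspan χ hχ hT b
  lie_mem {x v} hv := by
    change v ∈ wspan χ hχ hT b at hv
    change ⁅x, v⁆ ∈ wspan χ hχ hT b
    exact lie_mem_wspan (fun _ hl s => lie_word_mem hl s x) hv

variable {χ hχ hT b}

theorem word_mem_wt (l : List (Idx N × ι)) (s : Fin N → ℤ) :
    word χ hχ hT b l s ∈ T.wt _ (cvec (wsum l + hat s)) := by
  induction l with
  | nil =>
    rw [mem_wt]
    intro j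
    rw [word, base, d_eq, lie_vac rfl, topAct_gen_single, if_pos (by rfl),
      ← Finsupp.smul_single_one,
      CoindData.vac_smul]
    rw [show Fin.tail (0 : Idx N) = 0 from rfl, zero_add]
    simp [topCoef, wsum, cvec]
  | cons x l ih =>
    refine hT.gen_lie_mem_wt ih _ _ ?_
    rw [← cvec_add, wsum, wsum, List.map_cons, List.sum_cons]
    congr 1; abel

theorem lie_k_apply (j : Fin (N + 1)) (v : BigMod χ hχ hT) : ⁅T.k 0 j, v⁆ = χ j • v := by
  refine Subtype.ext (funext fun zs => ?_)
  rw [CoindData.lie_apply_of_central]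
  · change T.topAct χ hχ (T.k 0 j) (v.1 zs) = χ j • v.1 zs
    induction v.1 zs using Finsupp.induction_linear with
    | zero => simp
    | add x y hx hy => rw [map_add, hx, hy, smul_add]
    | single s c =>
      rw [k_eq, topAct_gen_single, if_pos (by rfl),
        show Fin.tail (0 : Idx N) = 0 from rfl, zero_add]
      simp [topCoef]
  · intro x
    induction mem_part_true x using part_induction with
    | zero => simp
    | add x y _ _ h h' => rw [add_lie, h, h', add_zero]
    | smul t x _ h => rw [smul_lie, h, smul_zero]
    | gen r w _ =>
      rw [k_eq, gen_split, add_lie, add_lie, hT.lie_gk, hT.lie_kk, hT.lie_dk, cvec_zero]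
      have : ((0, (w.2.2 ⬝ᵥ 0) • Pi.single j 1 + (w.2.2 ⬝ᵥ Pi.single j 1) • cvec r, 0) :
          Coef N g) = (w.2.2 ⬝ᵥ Pi.single j 1) • (0, cvec r, 0) := by simp
      rw [this, map_smul, add_zero r, gen_k_cvec]
      simp
  · refine Subtype.ext (proj_of_nonpos ?_)
    rw [k_eq]
    exact gen_mem_part (P := (· ≤ 0)) le_rfl _

theorem mem_wt_wordMod {m : Fin (N + 1) → ℂ} {v : wordMod χ hχ hT b} :
    v ∈ T.wt _ m ↔ (v : BigMod χ hχ hT) ∈ T.wt _ m := by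
  simp only [mem_wt]
  refine forall_congr' fun j => ?_
  rw [← LieSubmodule.coe_bracket, ← LieSubmodule.coe_smul]
  exact Subtype.ext_iff

theorem mem_span_weight {m : Fin (N + 1) → ℂ} {v : wordMod χ hχ hT b} (hv : v ∈ T.wt _ m) :
    (v : BigMod χ hχ hT) ∈ Submodule.span ℂ
      (wvec χ hχ hT b '' {i | cvec (wsum i.1.1 + hat i.2) = m}) :=
  hT.mem_span_of_mem_wt (ω := fun i : NegWord N ι => cvec (wsum i.1.1 + hat i.2))
    (fun i => word_mem_wt i.1.1 i.2) (mem_wt_wordMod.1 hv) v.2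

theorem wsum_zero_nonpos {l : List (Idx N × ι)} (hl : ∀ x ∈ l, x.1 0 < 0) :
    wsum l 0 ≤ -l.length := by
  induction l with
  | nil => simp [wsum]
  | cons x l ih =>
    have h1 := hl x List.mem_cons_self
    have h2 := ih fun z hz => hl z (List.mem_cons_of_mem _ hz)
    rw [wsum, List.map_cons, List.sum_cons, ← wsum]
    push_cast [Pi.add_apply, List.length_cons]
    omega

theorem wordMod_inCat (hfin : ∀ m, FiniteDimensional ℂ (Submodule.span ℂ
      (wvec χ hχ hT b '' {i | cvec (wsum i.1.1 + hat i.2) = m}))) :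
    T.InCat (wordMod χ hχ hT b) χ where
  b1_indep := hT.iSupIndep_wt
  b1_spans := by
    rw [eq_top_iff]
    rintro ⟨v, hv⟩ -
    change v ∈ wspan χ hχ hT b at hv
    induction hv using Submodule.span_induction with
    | zero => exact zero_mem _
    | add x y _ _ h h' => exact add_mem h h'
    | smul t x _ h => exact Submodule.smul_mem _ t h
    | mem v hv =>
      obtain ⟨⟨⟨l, hl⟩, s⟩, rfl⟩ := hv
      exact Submodule.mem_iSup_of_mem _ (mem_wt_wordMod.2 (word_mem_wt l s))
  b2 m := by
    have := hfin m
    refine FiniteDimensional.of_injective (LinearMap.codRestrict (Submodule.span ℂ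
      (wvec χ hχ hT b '' {i | cvec (wsum i.1.1 + hat i.2) = m}))
      ((wordMod χ hχ hT b).toSubmodule.subtype ∘ₗ (T.wt (wordMod χ hχ hT b) m).subtype)
      fun v => mem_span_weight v.2) ?_
    intro v w h
    have h' := congrArg Subtype.val h
    exact Subtype.ext (Subtype.ext h')
  b3 j v := Subtype.ext (lie_k_apply j v.1)
  b4 := by
    refine ⟨0, fun m hm => ?_⟩
    obtain ⟨v, hv, hv0⟩ := (Submodule.ne_bot_iff _).1 hm
    have hs := mem_span_weight hv
    obtain ⟨i, hi⟩ : {i : NegWord N ι | cvec (wsum i.1.1 + hat i.2) = m}.Nonempty := by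
      by_contra hne
      rw [Set.not_nonempty_iff_eq_empty] at hne
      rw [hne, Set.image_empty, Submodule.span_empty, Submodule.mem_bot] at hs
      exact hv0 (Subtype.ext hs)
    rw [← show cvec (wsum i.1.1 + hat i.2) = m from hi]
    have := wsum_zero_nonpos i.1.2
    have h2 : wsum i.1.1 0 ≤ 0 := by omega
    simpa [cvec, hat] using h2

theorem nontrivial_wordMod : Nontrivial (wordMod χ hχ hT b) := by
  refine ⟨⟨⟨base χ hχ hT 0, word_mem (l := []) (by simp) 0⟩, 0, fun h => ?_⟩⟩
  have := congrArg (fun v : wordMod χ hχ hT b => v.1.1 []) h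
  have h2 : (Finsupp.single 0 1 : Top N) = 0 := this
  simp at h2

end Tor

end

end ToroidalPaper

namespace ToroidalPaper

noncomputable section

/-- A family of vectors is finite-dimensional when it is separated by functionals whose values
along the family stay in a finite-dimensional space of functions. -/
theorem finiteDimensional_span_range {R E Λ : Type} [AddCommGroup E] [Module ℂ E] (f : R → E)
    (P : Submodule ℂ (R → ℂ)) [FiniteDimensional ℂ P] (ℓ : Λ → E →ₗ[ℂ] ℂ)
    (hP : ∀ i, (fun r => ℓ i (f r)) ∈ P)
    (hsep : ∀ v ∈ Submodule.span ℂ (Set.range f), (∀ i, ℓ i v = 0) → v = 0) :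
    FiniteDimensional ℂ (Submodule.span ℂ (Set.range f)) := by
  let L := Finsupp.linearCombination ℂ f
  let Φ : (R →₀ ℂ) →ₗ[ℂ] Module.Dual ℂ P :=
    Finsupp.linearCombination ℂ fun r => (LinearMap.proj r ∘ₗ P.subtype : P →ₗ[ℂ] ℂ)
  have hL : LinearMap.range L = Submodule.span ℂ (Set.range f) :=
    Finsupp.range_linearCombination ℂ
  have hker : LinearMap.ker Φ ≤ LinearMap.ker L := by
    intro c hc
    refine hsep _ (hL ▸ LinearMap.mem_range_self L c) fun i => ?_
    have h := LinearMap.congr_fun (LinearMap.mem_ker.1 hc) ⟨_, hP i⟩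
    simpa [Φ, L, Finsupp.linearCombination_apply, Finsupp.sum, map_sum] using h
  have : FiniteDimensional ℂ ((R →₀ ℂ) ⧸ LinearMap.ker Φ) :=
    Module.Finite.equiv Φ.quotKerEquivRange.symm
  rw [← hL, ← (LinearMap.ker Φ).range_liftQ L hker]
  infer_instance

namespace Tor

open scoped Matrix

variable {N : ℕ} {g : Type} [LieRing g] [LieAlgebra ℂ g] {T : Tor N g}
  {B : g →ₗ[ℂ] g →ₗ[ℂ] ℂ} {μ ν : ℂ} {R : Type}

theorem pow_le_pow_of_one_mem {S : Submodule ℂ (R → ℂ)} (h1 : 1 ∈ S) {D D' : ℕ} (h : D ≤ D') :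
    S ^ D ≤ S ^ D' :=
  pow_le_pow_right₀ (Submodule.one_le.2 h1) h

theorem mul_mem_pow {S : Submodule ℂ (R → ℂ)} {D D' : ℕ} {q q' : R → ℂ} (h : q ∈ S ^ D)
    (h' : q' ∈ S ^ D') : q * q' ∈ S ^ (D + D') :=
  pow_add S D D' ▸ Submodule.mul_mem_mul h h'

theorem dotProduct_mem {S : Submodule ℂ (R → ℂ)} {n : ℕ} {a : R → Fin n → ℂ}
    (ha : ∀ j, (fun r => a r j) ∈ S) (δ : Fin n → ℂ) : (fun r => δ ⬝ᵥ a r) ∈ S := by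
  have : (fun r => δ ⬝ᵥ a r) = ∑ j, δ j • fun r => a r j := by
    ext r; simp [dotProduct]
  rw [this]
  exact Submodule.sum_mem _ fun j _ => Submodule.smul_mem _ _ (ha j)

variable (T) in
/-- Families of homogeneous elements of `t₀`-degree `n` with coefficients of degree `D` over a
space `S` of basic functions, whose degrees are given by functions in `S`. -/
def Fam (S : Submodule ℂ (R → ℂ)) (D : ℕ) (n : ℤ) : Submodule ℂ (R → T.G) :=
  Submodule.span ℂ {X | ∃ q ∈ S ^ D, ∃ a : R → Idx N, (∀ r, a r 0 = n) ∧
    (∀ j, (fun r => cvec (a r) j) ∈ S) ∧ ∃ w, X = fun r => q r • T.gen (a r) w}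

/-- Families of vectors of the top with coefficients of degree `D` over `S`. -/
def VFam (N : ℕ) (S : Submodule ℂ (R → ℂ)) (D : ℕ) : Submodule ℂ (R → Top N) :=
  Submodule.span ℂ {Z | ∃ q ∈ S ^ D, ∃ b : R → Fin N → ℤ,
    (∀ j, (fun r => (b r j : ℂ)) ∈ S) ∧ Z = fun r => q r • Finsupp.single (b r) 1}

variable {S : Submodule ℂ (R → ℂ)}

theorem mem_fam {D : ℕ} {n : ℤ} {q : R → ℂ} (hq : q ∈ S ^ D) {a : R → Idx N}
    (ha : ∀ r, a r 0 = n) (haS : ∀ j, (fun r => cvec (a r) j) ∈ S) (w : Coef N g) :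
    (fun r => q r • T.gen (a r) w) ∈ T.Fam S D n :=
  Submodule.subset_span ⟨q, hq, a, ha, haS, w, rfl⟩

theorem mem_vfam {D : ℕ} {q : R → ℂ} (hq : q ∈ S ^ D) {b : R → Fin N → ℤ}
    (hb : ∀ j, (fun r => (b r j : ℂ)) ∈ S) :
    (fun r => q r • Finsupp.single (b r) (1 : ℂ)) ∈ VFam N S D :=
  Submodule.subset_span ⟨q, hq, b, hb, rfl⟩

theorem fam_mem_part {P : ℤ → Prop} {D : ℕ} {n : ℤ} {X : R → T.G} (hX : X ∈ T.Fam S D n)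
    (hn : P n) (r : R) : X r ∈ T.part P := by
  induction hX using Submodule.span_induction with
  | zero => exact zero_mem _
  | add x y _ _ h h' => exact add_mem h h'
  | smul t x _ h => exact Submodule.smul_mem _ t h
  | mem X hX =>
    obtain ⟨q, -, a, ha, -, w, rfl⟩ := hX
    exact Submodule.smul_mem _ _ (gen_mem_part ((ha r).symm ▸ hn) w)

theorem vfam_mono (h1 : 1 ∈ S) {D D' : ℕ} (h : D ≤ D') : VFam N S D ≤ VFam N S D' := by
  refine Submodule.span_mono ?_
  rintro _ ⟨q, hq, h'⟩
  exact ⟨q, pow_le_pow_of_one_mem h1 h hq, h'⟩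

theorem gen_cvec_eq_sum (r m : Idx N) :
    T.gen r (0, cvec m, 0) = ∑ p, cvec m p • T.gen r (0, Pi.single p 1, 0) := by
  rw [gen_k]
  simp only [k_eq]

theorem IsToroidal.lie_gen_eq (hT : T.IsToroidal B μ ν) (r m : Idx N) (w w' : Coef N g) :
    ⁅T.gen r w, T.gen m w'⁆ = T.gen (r + m) (⁅w.1, w'.1⁆, 0, 0) +
      (w.2.2 ⬝ᵥ cvec m) • T.gen (r + m) w' - (w'.2.2 ⬝ᵥ cvec r) • T.gen (r + m) w +
      ∑ p, ((B w.1 w'.1 + w.2.2 ⬝ᵥ w'.2.1) * cvec r p +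
        (-(w'.2.2 ⬝ᵥ w.2.1) + (μ * ((w.2.2 ⬝ᵥ cvec m) * (w'.2.2 ⬝ᵥ cvec r)) +
          ν * ((w.2.2 ⬝ᵥ cvec r) * (w'.2.2 ⬝ᵥ cvec m)))) * cvec m p) •
        T.gen (r + m) (0, Pi.single p 1, 0) := by
  simp only [add_smul, mul_smul _ (cvec _ _), Finset.sum_add_distrib, ← Finset.smul_sum,
    ← gen_cvec_eq_sum]
  simp only [← add_smul]
  rw [hT.lie_gen]
  simp only [← map_smul, ← map_add, ← map_sub]
  refine congrArg _ (Prod.ext ?_ (Prod.ext ?_ ?_))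
  · simp
  · simp only [Prod.snd_add, Prod.fst_add, Prod.smul_snd, Prod.smul_fst, Prod.snd_sub,
      Prod.fst_sub]
    module
  · simp

theorem IsToroidal.lie_mem_fam (hT : T.IsToroidal B μ ν) (h1 : 1 ∈ S) {D D' : ℕ} {n n' : ℤ}
    {X Y : R → T.G} (hX : X ∈ T.Fam S D n) (hY : Y ∈ T.Fam S D' n') :
    (fun r => ⁅X r, Y r⁆) ∈ T.Fam S (D + D' + 3) (n + n') := by
  induction hX using Submodule.span_induction with
  | zero => simp only [Pi.zero_apply, zero_lie]; exact zero_mem _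
  | add x y _ _ h h' => simp only [Pi.add_apply, add_lie]; exact add_mem h h'
  | smul t x _ h => simp only [Pi.smul_apply, smul_lie]; exact Submodule.smul_mem _ t h
  | mem X hX =>
    obtain ⟨q, hq, a, ha, haS, w, rfl⟩ := hX
    induction hY using Submodule.span_induction with
    | zero => simp only [Pi.zero_apply, lie_zero]; exact zero_mem _
    | add x y _ _ h h' => simp only [Pi.add_apply, lie_add]; exact add_mem h h'
    | smul t x _ h => simp only [Pi.smul_apply, lie_smul]; exact Submodule.smul_mem _ t h
    | mem Y hY =>
      obtain ⟨q', hq', a', ha', haS', w', rfl⟩ := hY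
      have hs : ∀ r, (a + a') r 0 = n + n' := fun r => by simp [ha r, ha' r]
      have hsS : ∀ j, (fun r => cvec ((a + a') r) j) ∈ S := fun j => by
        simp only [Pi.add_apply, cvec_add]
        exact add_mem (haS j) (haS' j)
      have key : ∀ c ∈ S ^ 3, ∀ u, (fun r => (q r * q' r) • c r • T.gen ((a + a') r) u) ∈
          T.Fam S (D + D' + 3) (n + n') := fun c hc u => by
        simp only [smul_smul]
        exact mem_fam (mul_mem_pow (mul_mem_pow hq hq') hc) hs hsS u
      have k1 : ∀ c ∈ S, c ∈ S ^ 3 := fun c hc =>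
        pow_le_pow_of_one_mem h1 (show 1 ≤ 3 by omega) (by simpa using hc)
      have k3 : ∀ c ∈ S, ∀ c' ∈ S, ∀ c'' ∈ S, c * c' * c'' ∈ S ^ 3 := fun c hc c' hc' c'' hc'' => by
        rw [pow_three, ← mul_assoc]
        exact Submodule.mul_mem_mul (Submodule.mul_mem_mul hc hc') hc''
      have e : (fun r => ⁅q r • T.gen (a r) w, q' r • T.gen (a' r) w'⁆) =
          (fun r => (q r * q' r) • (1 : R → ℂ) r • T.gen ((a + a') r) (⁅w.1, w'.1⁆, 0, 0)) +
          (fun r => (q r * q' r) • (w.2.2 ⬝ᵥ cvec (a' r)) • T.gen ((a + a') r) w') -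
          (fun r => (q r * q' r) • (w'.2.2 ⬝ᵥ cvec (a r)) • T.gen ((a + a') r) w) +
          ∑ p, (fun r => (q r * q' r) • ((B w.1 w'.1 + w.2.2 ⬝ᵥ w'.2.1) * cvec (a r) p +
            (-(w'.2.2 ⬝ᵥ w.2.1) +
              (μ * ((w.2.2 ⬝ᵥ cvec (a' r)) * (w'.2.2 ⬝ᵥ cvec (a r))) +
                ν * ((w.2.2 ⬝ᵥ cvec (a r)) * (w'.2.2 ⬝ᵥ cvec (a' r))))) * cvec (a' r) p) •
            T.gen ((a + a') r) (0, Pi.single p 1, 0)) := by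
        ext1 r
        rw [smul_lie, lie_smul, hT.lie_gen_eq, smul_smul]
        simp only [Pi.add_apply, Pi.sub_apply, Finset.sum_apply, Pi.one_apply, one_smul,
          smul_add, smul_sub, Finset.smul_sum]
      rw [e]
      refine add_mem (sub_mem (add_mem (key 1 (k1 1 h1) _) (key _ (k1 _ (dotProduct_mem haS' _)) _))
        (key _ (k1 _ (dotProduct_mem haS _)) _)) (sum_mem fun p _ => ?_)
      refine key (fun r => (B w.1 w'.1 + w.2.2 ⬝ᵥ w'.2.1) * cvec (a r) p +
            (-(w'.2.2 ⬝ᵥ w.2.1) +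
              (μ * ((w.2.2 ⬝ᵥ cvec (a' r)) * (w'.2.2 ⬝ᵥ cvec (a r))) +
                ν * ((w.2.2 ⬝ᵥ cvec (a r)) * (w'.2.2 ⬝ᵥ cvec (a' r))))) * cvec (a' r) p) ?_ _
      have := add_mem (Submodule.smul_mem (S ^ 3) (B w.1 w'.1 + w.2.2 ⬝ᵥ w'.2.1) (k1 _ (haS p)))
        (add_mem (Submodule.smul_mem (S ^ 3) (-(w'.2.2 ⬝ᵥ w.2.1)) (k1 _ (haS' p)))
          (add_mem (Submodule.smul_mem (S ^ 3) μ
            (k3 _ (dotProduct_mem haS' w.2.2) _ (dotProduct_mem haS w'.2.2) _ (haS' p)))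
          (Submodule.smul_mem (S ^ 3) ν
            (k3 _ (dotProduct_mem haS w.2.2) _ (dotProduct_mem haS' w'.2.2) _ (haS' p)))))
      convert this using 1
      ext r
      simp only [Pi.add_apply, Pi.smul_apply, Pi.mul_apply, smul_eq_mul]
      ring

variable {χ : Fin (N + 1) → ℂ} {hχ : ∀ j, j ≠ 0 → χ j = 0}

theorem topAct_mem_vfam (h1 : 1 ∈ S) {D D' : ℕ} {n : ℤ} {X : R → T.G} {Z : R → Top N}
    (hX : X ∈ T.Fam S D n) (hZ : Z ∈ VFam N S D') :
    (fun r => T.topAct χ hχ (X r) (Z r)) ∈ VFam N S (D + D' + 1) := by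
  induction hX using Submodule.span_induction with
  | zero => simp only [Pi.zero_apply, map_zero, LinearMap.zero_apply]; exact zero_mem _
  | add x y _ _ h h' =>
    simp only [Pi.add_apply, map_add, LinearMap.add_apply]; exact add_mem h h'
  | smul t x _ h =>
    simp only [Pi.smul_apply, map_smul, LinearMap.smul_apply]; exact Submodule.smul_mem _ t h
  | mem X hX =>
    obtain ⟨q, hq, a, ha, haS, w, rfl⟩ := hX
    induction hZ using Submodule.span_induction with
    | zero => simp only [Pi.zero_apply, map_zero]; exact zero_mem _
    | add x y _ _ h h' => simp only [Pi.add_apply, map_add]; exact add_mem h h'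
    | smul t x _ h =>
      convert Submodule.smul_mem _ t h using 1
      exact funext fun r => map_smul _ t _
    | mem Z hZ =>
      obtain ⟨q', hq', b, hb, rfl⟩ := hZ
      simp only [map_smul, LinearMap.smul_apply, topAct_gen_single, ha, mul_one]
      split_ifs
      · have hc : (fun r => topCoef χ (b r) w) ∈ S ^ 1 := by
          rw [pow_one]
          have : (fun r => topCoef χ (b r) w) = (χ ⬝ᵥ w.2.1) • (1 : R → ℂ) +
              fun r => w.2.2 ⬝ᵥ cvec (hat (b r)) := by
            ext r; simp [topCoef, dotProduct_comm]
          rw [this]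
          refine add_mem (Submodule.smul_mem _ _ h1) (dotProduct_mem (fun j => ?_) _)
          refine Fin.cases ?_ (fun i => ?_) j
          · simp only [cvec, hat, Fin.cons_zero, Int.cast_zero]; exact zero_mem _
          · simpa only [cvec, hat, Fin.cons_succ] using hb i
        have := mem_vfam (N := N) (mul_mem_pow (mul_mem_pow hq hq') hc)
          (b := fun r => Fin.tail (a r) + b r) fun j => by
            simp only [Pi.add_apply, Int.cast_add]
            exact add_mem (haS j.succ) (hb j)
        convert this using 2 with r
        simp only [Pi.mul_apply, Finsupp.smul_single, smul_eq_mul, mul_one]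
        congr 1
        ring
      · simp only [smul_zero]; exact zero_mem _

end Tor

end

end ToroidalPaper

namespace ToroidalPaper

noncomputable section

namespace Tor

variable {N : ℕ} {g : Type} [LieRing g] [LieAlgebra ℂ g] {T : Tor N g}
  {B : g →ₗ[ℂ] g →ₗ[ℂ] ℂ} {μ ν : ℂ} {R : Type}
  {χ : Fin (N + 1) → ℂ} {hχ : ∀ j, j ≠ 0 → χ j = 0} {hT : T.IsToroidal B μ ν}
  {S : Submodule ℂ (R → ℂ)}

/-- The bound on the growth of the degree when evaluating on a list of families. -/
def famCost {A : Type} (Ys : List (A × ℕ)) : ℕ := (Ys.map fun Y => Y.2 + 3).sum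

/-- A family in the coinduced module whose values on families of positive elements are
families of bounded degree. -/
def IsFam (S : Submodule ℂ (R → ℂ)) (C : ℕ) (Φ : R → BigMod χ hχ hT) : Prop :=
  ∀ Ys : List ((R → posPart hT) × ℕ),
    (∀ Y ∈ Ys, ∃ n, (fun r => (Y.1 r : T.G)) ∈ T.Fam S Y.2 n) →
      (fun r => (Φ r).1 (Ys.map fun Y => Y.1 r)) ∈ VFam N S (C + famCost Ys)

theorem IsFam.tail {C : ℕ} {Φ : R → BigMod χ hχ hT} (h : IsFam S C Φ) {Y : R → posPart hT}
    {D : ℕ} {n : ℤ} (hY : (fun r => (Y r : T.G)) ∈ T.Fam S D n) :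
    IsFam S (C + D + 3) fun r =>
      (CoindData.tail (c := coindData χ hχ hT) (Y r) (Φ r) : BigMod χ hχ hT) := by
  intro Ys hYs
  have := h ((Y, D) :: Ys) (List.forall_mem_cons.2 ⟨⟨n, hY⟩, hYs⟩)
  rwa [famCost, List.map_cons, List.sum_cons, ← famCost, ← add_assoc, ← add_assoc] at this

theorem IsFam.lie_apply (h1 : 1 ∈ S) {Ys : List ((R → posPart hT) × ℕ)}
    (hYs : ∀ Y ∈ Ys, ∃ n, (fun r => (Y.1 r : T.G)) ∈ T.Fam S Y.2 n) {C D : ℕ} {n : ℤ}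
    {X : R → T.G} (hX : X ∈ T.Fam S D n) {Φ : R → BigMod χ hχ hT} (h : IsFam S C Φ) :
    (fun r => (⁅X r, Φ r⁆ : BigMod χ hχ hT).1 (Ys.map fun Y => Y.1 r)) ∈
      VFam N S (C + D + 3 + famCost Ys) := by
  induction Ys generalizing C D n X Φ with
  | nil =>
    have e : (fun r => (⁅X r, Φ r⁆ : BigMod χ hχ hT).1 (([] : List ((R → posPart hT) × ℕ)).map
        fun Y => Y.1 r)) = (fun r => T.topAct χ hχ (X r) ((Φ r).1 [])) +
          fun r => (Φ r).1 [(coindData χ hχ hT).pr (X r)] := rfl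
    rw [e]
    refine add_mem (vfam_mono h1 (by omega) (topAct_mem_vfam h1 hX (h [] (by simp)))) ?_
    by_cases hn : 1 ≤ n
    · have hp : (fun r => ((coindData χ hχ hT).pr (X r) : T.G)) ∈ T.Fam S D n := by
        convert hX using 2 with r
        exact proj_of_pos (fam_mem_part (P := (1 ≤ ·)) hX hn r)
      refine vfam_mono h1 ?_ (h [((fun r => (coindData χ hχ hT).pr (X r)), D)] ?_)
      · simp [famCost]; omega
      · simpa using ⟨n, hp⟩
    · have hp : ∀ r, (coindData χ hχ hT).pr (X r) = 0 := fun r =>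
        Subtype.ext (proj_of_nonpos (fam_mem_part (P := (· ≤ 0)) hX (by omega) r))
      simp only [hp, CoindData.coe_nil_singleton_zero]
      exact zero_mem _
  | cons Y Ys ih =>
    obtain ⟨⟨n', hY⟩, hYs⟩ := List.forall_mem_cons.1 hYs
    have e : (fun r => (⁅X r, Φ r⁆ : BigMod χ hχ hT).1 ((Y :: Ys).map fun Y => Y.1 r)) =
        (fun r => (⁅X r, (CoindData.tail (c := coindData χ hχ hT) (Y.1 r) (Φ r) :
          BigMod χ hχ hT)⁆ : BigMod χ hχ hT).1 (Ys.map fun Y => Y.1 r)) +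
        fun r => (⁅⁅(Y.1 r : T.G), X r⁆, Φ r⁆ : BigMod χ hχ hT).1 (Ys.map fun Y => Y.1 r) := rfl
    rw [e]
    have hc : famCost (Y :: Ys) = Y.2 + 3 + famCost Ys := by simp [famCost]
    rw [hc]
    refine add_mem (vfam_mono h1 ?_ (ih hYs hX (h.tail hY)))
      (vfam_mono h1 ?_ (ih hYs (hT.lie_mem_fam h1 hY hX) h)) <;> omega

theorem IsFam.lie (h1 : 1 ∈ S) {C D : ℕ} {n : ℤ} {X : R → T.G} (hX : X ∈ T.Fam S D n)
    {Φ : R → BigMod χ hχ hT} (h : IsFam S C Φ) : IsFam S (C + D + 3) fun r => ⁅X r, Φ r⁆ :=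
  fun _ hYs => IsFam.lie_apply h1 hYs hX h

variable {ι : Type} {b : Module.Basis ι ℂ (Coef N g)}

theorem isFam_word (h1 : 1 ∈ S) (L : List ((R → Idx N) × ι))
    (hL : ∀ x ∈ L, (∃ n, ∀ r, x.1 r 0 = n) ∧ ∀ j, (fun r => cvec (x.1 r) j) ∈ S)
    {s : R → Fin N → ℤ} (hs : ∀ j, (fun r => (s r j : ℂ)) ∈ S) :
    IsFam S (3 * L.length) fun r => word χ hχ hT b (L.map fun x => (x.1 r, x.2)) (s r) := by
  have h0 : (1 : R → ℂ) ∈ S ^ 0 := Submodule.one_le.1 le_rfl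
  induction L with
  | nil =>
    intro Ys _
    cases Ys with
    | nil =>
      have := mem_vfam h0 hs
      simp only [Pi.one_apply, one_smul] at this
      exact this
    | cons Y Ys => exact zero_mem _
  | cons x L ih =>
    obtain ⟨⟨⟨n, hn⟩, hS⟩, hL⟩ := List.forall_mem_cons.1 hL
    have := IsFam.lie h1 (mem_fam h0 hn hS (b x.2)) (ih hL)
    simp only [Pi.one_apply, one_smul] at this
    exact this

/-- The sum of the coefficients of a vector of the top. -/
def coefSum (N : ℕ) : Top N →ₗ[ℂ] ℂ := Finsupp.linearCombination ℂ fun _ => 1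

theorem coefSum_mem {D : ℕ} {Z : R → Top N} (hZ : Z ∈ VFam N S D) :
    (fun r => coefSum N (Z r)) ∈ S ^ D := by
  induction hZ using Submodule.span_induction with
  | zero => simp only [Pi.zero_apply, map_zero]; exact zero_mem _
  | add x y _ _ h h' => simp only [Pi.add_apply, map_add]; exact add_mem h h'
  | smul t x _ h =>
    convert Submodule.smul_mem _ t h using 1
    exact funext fun r => map_smul _ t _
  | mem Z hZ =>
    obtain ⟨q, hq, b, -, rfl⟩ := hZ
    simpa [coefSum] using hq

/-- A homogeneous element of positive degree. -/
abbrev PosIdx (N : ℕ) (g : Type) [LieRing g] [LieAlgebra ℂ g] := {r : Idx N // 1 ≤ r 0} × Coef N g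

variable (hT) in
/-- The element of the positive part attached to a positive index. -/
def posGen (y : PosIdx N g) : posPart hT := ⟨T.gen y.1.1 y.2, gen_mem_part y.1.2 _⟩

/-- The total `t₀`-degree of a list of positive homogeneous elements. -/
def posDeg (ys : List (PosIdx N g)) : ℤ := (ys.map fun y => y.1.1 0).sum

theorem length_le_posDeg (ys : List (PosIdx N g)) : (ys.length : ℤ) ≤ posDeg ys := by
  induction ys with
  | nil => simp [posDeg]
  | cons y ys ih =>
    have := y.1.2
    rw [posDeg, List.map_cons, List.sum_cons, ← posDeg]
    push_cast [List.length_cons]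
    omega

theorem const_mem_fam (h1 : 1 ∈ S) (y : PosIdx N g) :
    (fun _ : R => T.gen y.1.1 y.2) ∈ T.Fam S 0 (y.1.1 0) := by
  have := mem_fam (T := T) (Submodule.one_le.1 le_rfl : (1 : R → ℂ) ∈ S ^ 0)
    (a := fun _ => y.1.1) (fun _ => rfl) (fun j => ?_) y.2
  · simpa only [Pi.one_apply, one_smul] using this
  · convert Submodule.smul_mem S (cvec y.1.1 j) h1 using 1
    ext; simp

theorem IsFam.coefSum_apply_mem (h1 : 1 ∈ S) {C : ℕ} {Φ : R → BigMod χ hχ hT}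
    (h : IsFam S C Φ) (ys : List (PosIdx N g)) :
    (fun r => coefSum N ((Φ r).1 (ys.map (posGen hT)))) ∈ S ^ (C + 3 * ys.length) := by
  have := coefSum_mem (h (ys.map fun y => ((fun _ => posGen hT y), 0)) ?_)
  · have hc : famCost (ys.map fun y => ((fun _ : R => posGen hT y), 0)) = 3 * ys.length := by
      simp [famCost, Function.comp_def, mul_comm]
    rw [hc] at this
    have e : ∀ r, ((ys.map fun y => ((fun _ : R => posGen hT y), 0)).map fun Y => Y.1 r) =
        ys.map (posGen hT) := fun r => List.map_map
    exact (congrArg (fun F : R → List (posPart hT) => (fun r => coefSum N ((Φ r).1 (F r))) ∈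
      S ^ (C + 3 * ys.length)) (funext e)).mp this
  · simp only [List.mem_map]
    rintro _ ⟨y, -, rfl⟩
    exact ⟨_, const_mem_fam h1 y⟩

theorem apply_nil_eq_zero {m : Fin (N + 1) → ℂ} {v : BigMod χ hχ hT} (hv : v ∈ T.wt _ m)
    (h : m 0 = 0 → coefSum N (v.1 []) = 0) : v.1 [] = 0 := by
  set z : Top N := v.1 [] with hz
  have hd : ∀ j, T.topAct χ hχ (T.d 0 j) z = m j • z := by
    intro j
    have h1 := congrArg (fun u : BigMod χ hχ hT => u.1 []) (mem_wt.1 hv j)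
    have h2 : (coindData χ hχ hT).pr (T.d 0 j) = 0 := by
      refine Subtype.ext (proj_of_nonpos ?_)
      rw [d_eq]
      exact gen_mem_part (P := (· ≤ 0)) le_rfl _
    have h3 : (⁅T.d 0 j, v⁆ : BigMod χ hχ hT).1 [] = T.topAct χ hχ (T.d 0 j) z + v.1 [0] := by
      rw [← h2]; rfl
    rw [CoindData.coe_nil_singleton_zero, add_zero] at h3
    exact h3.symm.trans h1
  have hs : ∀ (y : Top N) j s, T.topAct χ hχ (T.d 0 j) y s = cvec (hat s) j * y s := by
    intro y j s
    induction y using Finsupp.induction_linear with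
    | zero => simp
    | add x y hx hy => rw [map_add, Finsupp.add_apply, hx, hy, Finsupp.add_apply, mul_add]
    | single t c =>
      rw [d_eq, topAct_gen_single, if_pos (by rfl), show Fin.tail (0 : Idx N) = 0 from rfl,
        zero_add]
      by_cases hst : t = s
      · subst hst; simp [topCoef]
      · simp [hst]
  have hm : ∀ j s, z s ≠ 0 → cvec (hat s) j = m j := by
    intro j s hne
    have := hs z j s
    rw [hd] at this
    exact (mul_right_cancel₀ hne (by simpa using this)).symm
  by_contra hne
  obtain ⟨s, hsz⟩ := Finsupp.ne_iff.1 hne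
  have hsingle : z = Finsupp.single s (z s) := by
    ext t
    by_cases hts : s = t
    · subst hts; simp
    · rw [Finsupp.single_apply, if_neg hts]
      by_contra htz
      refine hts (funext fun i => ?_)
      have := (hm i.succ s hsz).trans (hm i.succ t htz).symm
      simpa [cvec, hat] using this
  have h0 : m 0 = 0 := by rw [← hm 0 s hsz]; simp [cvec, hat]
  have := h h0
  rw [hsingle] at this
  exact hsz (by simpa [coefSum] using this)

theorem eq_zero_of_coefSum {m : Fin (N + 1) → ℂ} {v : BigMod χ hχ hT} (hv : v ∈ T.wt _ m)
    (h : ∀ ys : List (PosIdx N g), m 0 + posDeg ys = 0 →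
      coefSum N (v.1 (ys.map (posGen hT))) = 0) : v = 0 := by
  suffices ∀ zs, v.1 zs = 0 from Subtype.ext (funext this)
  intro zs
  induction zs generalizing m v with
  | nil => exact apply_nil_eq_zero hv fun h0 => h [] (by simpa [posDeg] using h0)
  | cons y zs ih =>
    obtain ⟨y, hy⟩ := y
    have hy' : y ∈ T.part (1 ≤ ·) := hy
    induction hy' using part_induction with
    | zero =>
      have := v.2.smul [] zs 0 0
      rw [zero_smul, zero_smul] at this
      exact this
    | add x y hx hx' h1 h2 =>
      exact (v.2.add [] zs ⟨x, hx⟩ ⟨y, hx'⟩).trans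
        ((congrArg₂ (· + ·) (h1 hx) (h2 hx')).trans (add_zero _))
    | smul t x hx h1 =>
      exact (v.2.smul [] zs t ⟨x, hx⟩).trans ((congrArg (t • ·) (h1 hx)).trans (smul_zero t))
    | gen r w hr =>
      let y : PosIdx N g := (⟨r, hr⟩, w)
      refine ih (m := m + cvec r) (v := CoindData.tail (c := coindData χ hχ hT) (posGen hT y) v)
        ?_ fun ys hys => ?_
      · exact (congrArg (· ∈ T.wt _ _) (CoindData.coe_lie_eq_tail (c := coindData χ hχ hT)
          (posGen hT y) v)).mp (hT.gen_lie_mem_wt hv r w rfl)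
      · refine h (y :: ys) ?_
        rw [posDeg, List.map_cons, List.sum_cons, ← posDeg]
        push_cast
        rw [← hys, ← add_assoc]
        rfl

end Tor

end

end ToroidalPaper

namespace ToroidalPaper

noncomputable section

namespace Tor

variable {N : ℕ} {g : Type} [LieRing g] [LieAlgebra ℂ g] {T : Tor N g}
  {B : g →ₗ[ℂ] g →ₗ[ℂ] ℂ} {μ ν : ℂ} {R : Type}
  {χ : Fin (N + 1) → ℂ} {hχ : ∀ j, j ≠ 0 → χ j = 0} {hT : T.IsToroidal B μ ν}

theorem finiteDimensional_span_of_isFam {S : Submodule ℂ (R → ℂ)} (hS : S.FG) (h1 : 1 ∈ S)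
    {C : ℕ} {Φ : R → BigMod χ hχ hT} (h : IsFam S C Φ) {m : Idx N}
    (hm : ∀ r, Φ r ∈ T.wt _ (cvec m)) :
    FiniteDimensional ℂ (Submodule.span ℂ (Set.range Φ)) := by
  have : FiniteDimensional ℂ ↥(S ^ (C + 3 * (-m 0).toNat)) :=
    Module.Finite.iff_fg.2 (hS.pow _)
  let ℓ : {ys : List (PosIdx N g) // m 0 + posDeg ys = 0} → BigMod χ hχ hT →ₗ[ℂ] ℂ := fun ys =>
    coefSum N ∘ₗ LinearMap.proj (ys.1.map (posGen hT)) ∘ₗ (coindData χ hχ hT).Coind.subtype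
  refine finiteDimensional_span_range Φ (S ^ (C + 3 * (-m 0).toNat)) ℓ (fun ys => ?_) ?_
  · have := length_le_posDeg ys.1
    have h2 := ys.2
    exact pow_le_pow_of_one_mem h1 (by omega) (h.coefSum_apply_mem h1 ys.1)
  · intro v hv h0
    have hv' : v ∈ T.wt (BigMod χ hχ hT) (cvec m) :=
      Submodule.span_le.2 (by rintro _ ⟨r, rfl⟩; exact hm r) hv
    refine eq_zero_of_coefSum hv' fun ys hys => h0 ⟨ys, ?_⟩
    unfold cvec at hys
    exact_mod_cast hys

variable {ι : Type} {b : Module.Basis ι ℂ (Coef N g)}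

/-- The word with prescribed basis vectors and `t₀`-degrees, prescribed remaining total degree `σ`,
and remaining degrees `r`. -/
def typeWord (χ : Fin (N + 1) → ℂ) (hχ : ∀ j, j ≠ 0 → χ j = 0) (hT : T.IsToroidal B μ ν)
    (b : Module.Basis ι ℂ (Coef N g)) {k : ℕ} (τ : Fin k → ι × ℤ) (σ : Fin N → ℤ)
    (r : Fin k → Fin N → ℤ) : BigMod χ hχ hT :=
  word χ hχ hT b (List.ofFn fun i => (Fin.cons (τ i).2 (r i), (τ i).1)) (σ - ∑ i, r i)

theorem typeWord_mem_wt {k : ℕ} (τ : Fin k → ι × ℤ) (σ : Fin N → ℤ) (r : Fin k → Fin N → ℤ) :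
    typeWord χ hχ hT b τ σ r ∈ T.wt _ (cvec (Fin.cons (∑ i, (τ i).2) σ)) := by
  have h := word_mem_wt (χ := χ) (hχ := hχ) (hT := hT) (b := b)
    (List.ofFn fun i => ((Fin.cons (τ i).2 (r i) : Idx N), (τ i).1)) (σ - ∑ i, r i)
  have e : wsum (List.ofFn fun i => ((Fin.cons (τ i).2 (r i) : Idx N), (τ i).1)) +
      hat (σ - ∑ i, r i) = Fin.cons (∑ i, (τ i).2) σ := by
    rw [wsum, List.map_ofFn, List.sum_ofFn]
    ext j
    refine Fin.cases ?_ (fun i => ?_) j <;> simp [hat]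
  rw [e] at h
  exact h

/-- The coordinate functions of families of degrees lie in a finite-dimensional space
containing the constants. -/
theorem exists_fg_coord_mem (k N : ℕ) : ∃ S : Submodule ℂ ((Fin k → Fin N → ℤ) → ℂ), S.FG ∧
    1 ∈ S ∧ ∀ i j, (fun r => (r i j : ℂ)) ∈ S :=
  ⟨Submodule.span ℂ ({1} ∪ Set.range fun (p : Fin k × Fin N) r => (r p.1 p.2 : ℂ)),
    Submodule.fg_span ((Set.finite_singleton _).union (Set.finite_range _)),
    Submodule.subset_span (Or.inl rfl), fun i j => Submodule.subset_span (Or.inr ⟨(i, j), rfl⟩)⟩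

theorem finiteDimensional_span_typeWord {k : ℕ} (τ : Fin k → ι × ℤ) (σ : Fin N → ℤ) :
    FiniteDimensional ℂ (Submodule.span ℂ (Set.range (typeWord χ hχ hT b τ σ))) := by
  obtain ⟨S, hfg, h1, hr⟩ := exists_fg_coord_mem k N
  have hc : ∀ c : ℂ, (fun _ => c) ∈ S := fun c => by
    convert Submodule.smul_mem _ c h1 using 1
    ext; simp
  refine finiteDimensional_span_of_isFam hfg h1 (C := 3 * k) ?_ (typeWord_mem_wt τ σ)
  let L : List (((Fin k → Fin N → ℤ) → Idx N) × ι) :=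
    List.ofFn fun i => (fun r => Fin.cons (τ i).2 (r i), (τ i).1)
  have := isFam_word (χ := χ) (hχ := hχ) (hT := hT) (b := b) h1 L ?_
    (s := fun r => σ - ∑ i, r i) fun j => ?_
  · simp only [L, List.map_ofFn, List.length_ofFn] at this
    exact this
  · intro x hx
    obtain ⟨i, rfl⟩ := (List.mem_ofFn' _ _).1 hx
    refine ⟨⟨(τ i).2, fun r => rfl⟩, fun j => ?_⟩
    refine Fin.cases ?_ (fun j => ?_) j
    · exact hc ((τ i).2 : ℂ)
    · exact hr i j
  · convert sub_mem (hc (σ j)) (sum_mem (t := Finset.univ) fun i _ => hr i j) using 1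
    ext r
    simp

theorem wsum_zero_le {l : List (Idx N × ι)} (hl : ∀ x ∈ l, x.1 0 < 0) {x : Idx N × ι}
    (hx : x ∈ l) : wsum l 0 ≤ x.1 0 := by
  induction l with
  | nil => simp at hx
  | cons y l ih =>
    obtain ⟨hy, hl'⟩ := List.forall_mem_cons.1 hl
    have e : wsum (y :: l) 0 = y.1 0 + wsum l 0 := by simp [wsum]
    rcases List.mem_cons.1 hx with rfl | hx
    · have := wsum_zero_nonpos hl'
      omega
    · have := ih hl' hx
      omega

theorem finiteDimensional_span_wvec [Finite ι] (m : Fin (N + 1) → ℂ) :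
    FiniteDimensional ℂ (Submodule.span ℂ
      (wvec χ hχ hT b '' {i | cvec (wsum i.1.1 + hat i.2) = m})) := by
  rcases Set.eq_empty_or_nonempty {i : NegWord N ι | cvec (wsum i.1.1 + hat i.2) = m} with
    he | ⟨i₀, hi₀⟩
  · rw [he, Set.image_empty, Submodule.span_empty]
    infer_instance
  obtain ⟨M, rfl⟩ : ∃ M : Idx N, cvec M = m := ⟨_, hi₀⟩
  let Ty := Σ k : Fin ((-M 0).toNat + 1), Fin k → ι × Set.Icc (M 0) 0
  let F : Ty → Submodule ℂ (BigMod χ hχ hT) := fun τ => Submodule.span ℂ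
    (Set.range (typeWord χ hχ hT b (fun i => ((τ.2 i).1, ((τ.2 i).2 : ℤ))) (Fin.tail M)))
  have : ∀ τ, FiniteDimensional ℂ (F τ) := fun τ => finiteDimensional_span_typeWord _ _
  have hle : Submodule.span ℂ
      (wvec χ hχ hT b '' {i | cvec (wsum i.1.1 + hat i.2) = cvec M}) ≤ ⨆ τ, F τ := by
    refine Submodule.span_le.2 ?_
    rintro _ ⟨⟨⟨l, hl⟩, s⟩, hi, rfl⟩
    have hM : wsum l + hat s = M :=
      funext fun j => Int.cast_injective (α := ℂ) (congrFun hi j)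
    have hM0 : wsum l 0 = M 0 := by rw [← hM]; simp [hat]
    have hs : Fin.tail M - ∑ i, Fin.tail (l.get i).1 = s := by
      ext j
      have : wsum l j.succ = ∑ i, (l.get i).1 j.succ := by
        conv_lhs => rw [← List.ofFn_get l]
        rw [wsum, List.map_ofFn, List.sum_ofFn]
        simp
      have h2 : wsum l j.succ + s j = M j.succ := congrFun hM j.succ
      rw [Pi.sub_apply, Finset.sum_apply]
      simp only [Fin.tail]
      omega
    have hlen := wsum_zero_nonpos hl
    refine Submodule.mem_iSup_of_mem (p := F) ⟨⟨l.length, by omega⟩, fun i =>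
      ((l.get i).2, ⟨(l.get i).1 0, hM0 ▸ wsum_zero_le hl (l.get_mem i),
        (hl _ (l.get_mem i)).le⟩)⟩ (Submodule.subset_span ⟨fun i => Fin.tail (l.get i).1, ?_⟩)
    rw [typeWord, wvec]
    congr 1
    simp only [Fin.cons_self_tail, Prod.mk.eta]
    exact List.ofFn_get l
  exact Submodule.finiteDimensional_of_le hle

end Tor

end

end ToroidalPaper


namespace ToroidalPaper

/-- Theorem 2.5(a): for a non-zero linear map χ : Z → ℂ
(recorded by its values χ j = χ(k_j) on the spanning set {k₀,…,k_N}), the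
category B_χ contains a non-zero g(μ,ν)-module if and only if χ(k₀) ≠ 0 and
χ(k_j) = 0 for all j = 1,…,N. -/
theorem statement5 (N : ℕ) (hN : 1 ≤ N) (g : Type) [LieRing g] [LieAlgebra ℂ g]
    [FiniteDimensional ℂ g] [LieAlgebra.IsSimple ℂ g]
    (B : g →ₗ[ℂ] g →ₗ[ℂ] ℂ)
    (hBsymm : ∀ x y : g, B x y = B y x)
    (hBnondeg : ∀ x : g, (∀ y : g, B x y = 0) → x = 0)
    (hBinv : ∀ x y z : g, B ⁅x, y⁆ z = B x ⁅y, z⁆)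
    (μ ν : ℂ) (T : Tor N g) (hT : T.IsToroidal B μ ν)
    (χ : Fin (N + 1) → ℂ) (hχ : χ ≠ 0) :
    (∃ C : CatObj T χ, Nontrivial C.carrier) ↔
      (χ 0 ≠ 0 ∧ ∀ j : Fin (N + 1), j ≠ 0 → χ j = 0) := by
  constructor
  · rintro ⟨C, hC⟩
    have h : ∀ j, j ≠ 0 → χ j = 0 := C.incat.char_eq_zero hT
    refine ⟨fun h0 => hχ (funext fun j => ?_), h⟩
    by_cases hj : j = 0
    · rw [hj, h0]; rfl
    · exact h j hj
  · rintro ⟨_, h⟩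
    exact ⟨{ carrier := Tor.wordMod χ h hT (Module.finBasis ℂ (Tor.Coef N g))
             incat := Tor.wordMod_inCat Tor.finiteDimensional_span_wvec },
      Tor.nontrivial_wordMod⟩

end ToroidalPaper
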